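/- Let v be a non-constant harmonic function on the open unit ball B₁ ⊂ ℝⁿ with Z(v) ∩ B_{1/2} ≠ ∅, and set Z = Z(v). Then there exist constants M = M(Z) > 0 and c = c(Z) > 0 such that for every harmonic function u on B₁ with Z(u) = Z, sup_{x ∈ B_{1/16}} |u(x)| ≤ M · sup { |u(y)| : y ∈ B_{1/2}, dist(y, Z) ≥ c }. -/

import Mathlib

open Metric Set Filter

noncomputable section

abbrev En (n : ℕ) : Type := EuclideanSpace ℝ (Fin n)

/-- The Laplacian of `u` at `x`, computed from the second iterated Fréchet derivative. -/
def laplacianAt {n : ℕ} (u : En n → ℝ) (x : En n) : ℝ :=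
  ∑ i : Fin n, iteratedFDeriv ℝ 2 u x ![EuclideanSpace.single i 1, EuclideanSpace.single i 1]

/-- `u` is harmonic on `Ω`: twice continuously differentiable with vanishing Laplacian. -/
def HarmonicOnSet {n : ℕ} (u : En n → ℝ) (Ω : Set (En n)) : Prop :=
  ContDiffOn ℝ 2 u Ω ∧ ∀ x ∈ Ω, laplacianAt u x = 0

/-- The zero set of `u` within `Ω`. -/
def zeroSet {n : ℕ} (u : En n → ℝ) (Ω : Set (En n)) : Set (En n) :=
  {x ∈ Ω | u x = 0}

/-- The collection of nodal domains of `u` in `Ω`, i.e. the connected components of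
`Ω \ Z(u)`. -/
def nodalComponents {n : ℕ} (u : En n → ℝ) (Ω : Set (En n)) : Set (Set (En n)) :=
  {C | ∃ x ∈ Ω \ zeroSet u Ω, C = connectedComponentIn (Ω \ zeroSet u Ω) x}

/-!
Fix `x` near the zero set `Z` of `v`, at distance `d` from it. Doubling makes `|v|` at most
`|v x| / 2` within distance comparable to `d` of nearby zeros, so, cutting `v` off to the component
`D` of `{|v| > |v x| / 2}` containing `x` in a ball of radius `16 * d`, the mean value inequality
gives a point `y ∈ D` with `|v y| ≥ (1 + δ) * |v x|`. As `D` stays a fixed multiple of `d` away from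
`Z`, a Harnack chain in `D` of bounded length yields `|u x| ≤ C * |u y|` for every harmonic `u` with
zero set `Z`, with `C` independent of `u`.

Hence `|u| * |v| ^ β` at least doubles in each such step once `β` is large. By the Łojasiewicz bound
`d ^ N ≤ A * |v x|`, another consequence of doubling, the lengths of the steps are dominated by a
geometric series, so iteration reaches the region `dist(·, Z) ≥ c` without moving far from `x`. This
bounds `|u x| * d ^ N`, with another `N`, by a multiple of the supremum `m` of `|u|` there.

A second iteration removes the weight: `|u|` itself grows by a fixed factor within distance
comparable to `d`, and the weighted bound makes such a step at most a multiple of `(m / |u x|) ^ γ`.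
If `|u x|` exceeds a large multiple of `m`, the total length is again small, and the iteration
reaches the region where `|u| ≤ m`, a contradiction.
-/

open InnerProductSpace MeasureTheory Module
open scoped Laplacian Topology

lemma hasDerivAt_posPart_pow (k : ℕ) (s : ℝ) :
    HasDerivAt (fun s : ℝ => max s 0 ^ (k + 2)) ((k + 2) * max s 0 ^ (k + 1)) s := by
  rcases lt_trichotomy s 0 with h | rfl | h
  · have h0 : (fun s : ℝ => max s 0 ^ (k + 2)) =ᶠ[𝓝 s] fun _ => 0 := by
      filter_upwards [eventually_lt_nhds h] with t ht
      simp [max_eq_right ht.le]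
    simpa [max_eq_right h.le] using (hasDerivAt_const s (0 : ℝ)).congr_of_eventuallyEq h0
  · have hO : (fun x : ℝ => max x 0 ^ (k + 2)) =O[𝓝 0] fun x : ℝ => x ^ (k + 2) := by
      refine Asymptotics.IsBigO.of_bound 1 (Eventually.of_forall fun x => ?_)
      rw [one_mul, norm_pow, norm_pow]
      gcongr
      rcases le_total x 0 with hx | hx <;> simp [hx]
    simpa [hasDerivAt_iff_isLittleO] using
      hO.trans_isLittleO (Asymptotics.isLittleO_pow_id (by omega : 1 < k + 2))
  · have h0 : (fun s : ℝ => max s 0 ^ (k + 2)) =ᶠ[𝓝 s] fun s => s ^ (k + 2) := by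
      filter_upwards [eventually_gt_nhds h] with t ht
      simp [max_eq_left ht.le]
    simpa [max_eq_left h.le] using (hasDerivAt_pow (k + 2) s).congr_of_eventuallyEq h0

lemma contDiff_posPart_pow (k : ℕ) : ContDiff ℝ k fun s : ℝ => max s 0 ^ (k + 1) := by
  induction k with
  | zero => exact contDiff_zero.2 (by fun_prop)
  | succ k ih =>
    have hderiv : deriv (fun s : ℝ => max s 0 ^ (k + 2)) =
        fun s => (k + 2 : ℝ) * max s 0 ^ (k + 1) :=
      funext fun s => (hasDerivAt_posPart_pow k s).deriv
    rw [Nat.cast_succ, contDiff_succ_iff_deriv]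
    refine ⟨fun s => (hasDerivAt_posPart_pow k s).differentiableAt, by simp, ?_⟩
    rw [hderiv]
    exact contDiff_const.mul ih

section Bump

variable {E : Type*} [NormedAddCommGroup E]

/-- The radial weight `(1 - ‖x‖²)₊ ^ k` on the unit ball. Averages use `k = 2`; the weight with
`k = 3` is, up to a factor, a potential of it: `∇ (ballBump 3) x = -6 * ballBump 2 x • x`. -/
def ballBump (k : ℕ) (x : E) : ℝ := max (1 - ‖x‖ ^ 2) 0 ^ k

lemma ballBump_nonneg (k : ℕ) (x : E) : 0 ≤ ballBump k x :=
  pow_nonneg (le_max_right _ _) k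

lemma ballBump_le_one (k : ℕ) (x : E) : ballBump k x ≤ 1 :=
  pow_le_one₀ (le_max_right _ _) (max_le (by linarith [sq_nonneg ‖x‖]) zero_le_one)

lemma ballBump_eq_zero {k : ℕ} {x : E} (hx : 1 ≤ ‖x‖) : ballBump (k + 1) x = 0 := by
  rw [ballBump, max_eq_right (by nlinarith), zero_pow k.succ_ne_zero]

lemma half_le_ballBump_two {x : E} (hx : ‖x‖ ≤ 1 / 2) : 1 / 2 ≤ ballBump 2 x := by
  have h : 3 / 4 ≤ max (1 - ‖x‖ ^ 2) 0 := le_max_of_le_left (by nlinarith [norm_nonneg x])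
  unfold ballBump
  nlinarith

@[fun_prop]
lemma continuous_ballBump (k : ℕ) : Continuous (ballBump k : E → ℝ) := by
  unfold ballBump; fun_prop

lemma add_smul_mem_closedBall [NormedSpace ℝ E] {c x : E} {r : ℝ} (hr : 0 ≤ r) (hx : ‖x‖ ≤ 1) :
    c + r • x ∈ closedBall c r := by
  rw [mem_closedBall, dist_self_add_left, norm_smul, Real.norm_of_nonneg hr]
  exact mul_le_of_le_one_right hr hx

lemma add_smul_mem_ball [NormedSpace ℝ E] {c x : E} {r : ℝ} (hr : 0 < r) (hx : ‖x‖ < 1) :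
    c + r • x ∈ ball c r := by
  rw [mem_ball, dist_self_add_left, norm_smul, Real.norm_of_nonneg hr.le]
  exact mul_lt_of_lt_one_right hr hx

lemma ballBump_mul_comp_nonneg [NormedSpace ℝ E] {k : ℕ} {f : E → ℝ} {c : E} {r : ℝ} (hr : 0 < r)
    (h : ∀ x ∈ ball c r, 0 ≤ f x) (x : E) : 0 ≤ ballBump (k + 1) x * f (c + r • x) := by
  rcases lt_or_ge ‖x‖ 1 with hx | hx
  · exact mul_nonneg (ballBump_nonneg _ x) (h _ (add_smul_mem_ball hr hx))
  · simp [ballBump_eq_zero hx]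

end Bump

section Derivatives

variable {E : Type*} [NormedAddCommGroup E] [InnerProductSpace ℝ E]

lemma hasFDerivAt_ballBump (k : ℕ) (x : E) :
    HasFDerivAt (ballBump (k + 2)) ((-(2 * (k + 2)) * ballBump (k + 1) x) • innerSL ℝ x) x := by
  have hsq : HasFDerivAt (fun y : E => 1 - ‖y‖ ^ 2) (-(2 • innerSL ℝ x)) x := by
    simpa using (hasStrictFDerivAt_norm_sq x).hasFDerivAt.const_sub (1 : ℝ)
  refine ((hasDerivAt_posPart_pow k (1 - ‖x‖ ^ 2)).comp_hasFDerivAt x hsq).congr_fderiv ?_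
  ext e
  simp only [smul_neg, neg_apply, smul_apply, coe_innerSL_apply, nsmul_eq_mul, Nat.cast_ofNat,
    smul_eq_mul, ballBump, neg_mul, neg_smul, neg_inj]
  ring

lemma hasDerivAt_comp_add_smul {U : E → ℝ} (hU : Differentiable ℝ U) {a : ℝ → ℝ} {a' t : ℝ}
    (ha : HasDerivAt a a' t) (c x : E) :
    HasDerivAt (fun t => U (c + a t • x)) (a' * fderiv ℝ U (c + a t • x) x) t := by
  refine ((hU _).hasFDerivAt.comp_hasDerivAt t ((ha.smul_const x).const_add c)).congr_deriv ?_
  simp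

lemma fderiv_comp_add_smul (U : E → ℝ) (c : E) (a : ℝ) (x : E) :
    fderiv ℝ (fun y => U (c + a • y)) x = a • fderiv ℝ U (c + a • x) := by
  rw [fderiv_comp_smul (f := fun y => U (c + y)), fderiv_comp_add_left]

lemma fderiv_mul_fderiv_sub_mul_fderiv {A B : E → ℝ} (hA : ContDiff ℝ 2 A) (hB : ContDiff ℝ 2 B)
    (x e : E) :
    fderiv ℝ (fun y => B y * fderiv ℝ A y e - A y * fderiv ℝ B y e) x e =
      B x * fderiv ℝ (fderiv ℝ A) x e e - A x * fderiv ℝ (fderiv ℝ B) x e e := by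
  have hA0 := (hA.differentiable two_ne_zero x).hasFDerivAt
  have hB0 := (hB.differentiable two_ne_zero x).hasFDerivAt
  have hA1 := ((hA.fderiv_right (m := 1) le_rfl).differentiable one_ne_zero x).hasFDerivAt.clm_apply
    (hasFDerivAt_const e x)
  have hB1 := ((hB.fderiv_right (m := 1) le_rfl).differentiable one_ne_zero x).hasFDerivAt.clm_apply
    (hasFDerivAt_const e x)
  rw [((hB0.fun_mul hA1).fun_sub (hA0.fun_mul hB1)).fderiv]
  simp only [ContinuousLinearMap.comp_zero, zero_add, sub_apply, add_apply, smul_apply,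
    ContinuousLinearMap.flip_apply, smul_eq_mul]
  ring

variable [FiniteDimensional ℝ E]

lemma laplacian_eq_sum_fderiv {ι : Type*} [Fintype ι] (b : OrthonormalBasis ι ℝ E) (U : E → ℝ)
    (x : E) : Δ U x = ∑ i, fderiv ℝ (fderiv ℝ U) x (b i) (b i) := by
  simp [laplacian_eq_iteratedFDeriv_orthonormalBasis U b, iteratedFDeriv_two_apply]

lemma laplacian_comp_add_smul {U : E → ℝ} (hU : ContDiff ℝ 2 U) (c : E) (a : ℝ) (x : E) :
    Δ (fun y => U (c + a • y)) x = a ^ 2 * Δ U (c + a • x) := by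
  have hUc : ContDiff ℝ (2 : ℕ) fun y => U (c + y) := hU.comp (by fun_prop)
  simp only [laplacian_eq_iteratedFDeriv_stdOrthonormalBasis,
    iteratedFDeriv_comp_const_smul a hUc, iteratedFDeriv_comp_add_left, Finset.mul_sum,
    smul_apply, smul_eq_mul]

lemma laplacian_comp {ι : Type*} [Fintype ι] (b : OrthonormalBasis ι ℝ E) {ψ : ℝ → ℝ} {U : E → ℝ}
    {x : E} (hψ : ContDiff ℝ 2 ψ) (hU : ContDiffAt ℝ 2 U x) :
    Δ (fun y => ψ (U y)) x =
      deriv (deriv ψ) (U x) * ∑ i, fderiv ℝ U x (b i) ^ 2 + deriv ψ (U x) * Δ U x := by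
  have hψ' : Differentiable ℝ (deriv ψ) :=
    (contDiff_succ_iff_deriv (n := 1).1 hψ).2.2.differentiable one_ne_zero
  have hU' : DifferentiableAt ℝ (fderiv ℝ U) x :=
    (hU.fderiv_right (m := 1) le_rfl).differentiableAt one_ne_zero
  have hfd : fderiv ℝ (fun y => ψ (U y)) =ᶠ[𝓝 x] fun y => deriv ψ (U y) • fderiv ℝ U y := by
    filter_upwards [hU.eventually (by simp)] with y hy
    exact ((hψ.differentiable two_ne_zero (U y)).hasDerivAt.comp_hasFDerivAt y
      (hy.differentiableAt two_ne_zero).hasFDerivAt).fderiv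
  have hfd2 := hfd.fderiv_eq.trans (((hψ' (U x)).hasDerivAt.comp_hasFDerivAt x
    (hU.differentiableAt two_ne_zero).hasFDerivAt).fun_smul hU'.hasFDerivAt).fderiv
  rw [laplacian_eq_sum_fderiv b, laplacian_eq_sum_fderiv b, hfd2,
    Finset.mul_sum, Finset.mul_sum, ← Finset.sum_add_distrib]
  refine Finset.sum_congr rfl fun i _ => ?_
  simp only [Function.comp_apply, add_apply, smul_apply, ContinuousLinearMap.smulRight_apply,
    smul_eq_mul]
  ring

lemma laplacian_comp_nonneg {ψ : ℝ → ℝ} {U : E → ℝ} {x : E} (hψ : ContDiff ℝ 2 ψ)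
    (hU : HarmonicAt U x) (hconvex : 0 ≤ deriv (deriv ψ) (U x)) :
    0 ≤ Δ (fun y => ψ (U y)) x := by
  rw [laplacian_comp (stdOrthonormalBasis ℝ E) hψ hU.1, hU.2.eq_of_nhds, Pi.zero_apply, mul_zero,
    add_zero]
  exact mul_nonneg hconvex (Finset.sum_nonneg fun i _ => sq_nonneg _)

lemma exists_contDiff_eqOn_closedBall {f : E → ℝ} {c : E} {r R : ℝ} (hr : 0 < r) (hrR : r < R)
    (hf : ContDiffOn ℝ 2 f (ball c R)) : ∃ g, ContDiff ℝ 2 g ∧ EqOn g f (closedBall c r) := by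
  let b : ContDiffBump c := ⟨r, (r + R) / 2, hr, by linarith⟩
  refine ⟨fun x => b x * f x, contDiff_iff_contDiffAt.2 fun x => ?_,
    fun x hx => by simp [b.one_of_mem_closedBall hx]⟩
  by_cases hx : x ∈ ball c R
  · exact b.contDiff.contDiffAt.mul (hf.contDiffAt (isOpen_ball.mem_nhds hx))
  · have hzero : (fun x => b x * f x) =ᶠ[𝓝 x] fun _ => 0 := by
      have hxb : x ∈ (closedBall c b.rOut)ᶜ := by
        simp only [mem_ball, not_lt, mem_compl_iff, mem_closedBall, not_le, b] at hx ⊢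
        linarith
      filter_upwards [isClosed_closedBall.isOpen_compl.mem_nhds hxb] with y hy
      rw [mem_compl_iff, mem_closedBall, not_le] at hy
      rw [b.zero_of_le_dist hy.le, zero_mul]
    exact contDiffAt_const.congr_of_eventuallyEq hzero

lemma laplacian_eq_of_eqOn {f g : E → ℝ} {s : Set E} {x : E} (h : EqOn g f s) (hx : s ∈ 𝓝 x) :
    Δ g x = Δ f x :=
  (laplacian_congr_nhds (h.eventuallyEq_of_mem hx)).eq_of_nhds

end Derivatives

section Green

variable {E : Type*} [NormedAddCommGroup E] [InnerProductSpace ℝ E] [FiniteDimensional ℝ E]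
  [MeasurableSpace E] [BorelSpace E]

lemma integrable_ballBump_mul (k : ℕ) {F : E → ℝ} (hF : ContinuousOn F (closedBall 0 1)) :
    Integrable fun x => ballBump (k + 1) x * F x := by
  refine (((continuous_ballBump _).continuousOn.mul hF).integrableOn_compact
    (isCompact_closedBall 0 1)).integrable_of_forall_notMem_eq_zero fun x hx => ?_
  rw [mem_closedBall_zero_iff, not_le] at hx
  exact mul_eq_zero_of_left (ballBump_eq_zero hx.le) (F x)

lemma integral_ballBump_mul_fderiv (k : ℕ) {F : E → ℝ} (hF : ContDiff ℝ 1 F) (e : E) :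
    ∫ x, ballBump (k + 2) x * fderiv ℝ F x e =
      2 * (k + 2) * ∫ x : E, ballBump (k + 1) x * (inner ℝ x e * F x) := by
  have hFc : Continuous F := hF.continuous
  have hfd (x : E) : fderiv ℝ (ballBump (k + 2)) x e * F x =
      -(2 * (k + 2)) * (ballBump (k + 1) x * (inner ℝ x e * F x)) := by
    simp only [(hasFDerivAt_ballBump k x).fderiv, smul_apply, innerSL_apply_apply, smul_eq_mul]
    ring
  rw [integral_mul_fderiv_eq_neg_fderiv_mul_of_integrable, integral_congr_ae (ae_of_all _ hfd),
    integral_const_mul, neg_mul, neg_neg]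
  · refine (integrable_congr (ae_of_all _ hfd)).2 (Integrable.const_mul ?_ _)
    exact integrable_ballBump_mul k (by fun_prop)
  · exact integrable_ballBump_mul (k + 1)
      ((hF.continuous_fderiv one_ne_zero).clm_apply continuous_const).continuousOn
  · exact integrable_ballBump_mul (k + 1) hFc.continuousOn
  · exact fun x _ => (hasFDerivAt_ballBump k x).differentiableAt
  · exact fun x _ => hF.differentiable one_ne_zero x

lemma green_ballBump (k : ℕ) {A B : E → ℝ} (hA : ContDiff ℝ 2 A) (hB : ContDiff ℝ 2 B) :
    2 * (k + 2) * ∫ x, ballBump (k + 1) x * (B x * fderiv ℝ A x x - A x * fderiv ℝ B x x) =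
      ∫ x, ballBump (k + 2) x * (B x * Δ A x - A x * Δ B x) := by
  let b := stdOrthonormalBasis ℝ E
  let F (i) (x : E) : ℝ := B x * fderiv ℝ A x (b i) - A x * fderiv ℝ B x (b i)
  have hF (i) : ContDiff ℝ 1 (F i) :=
    ((hB.of_le one_le_two).mul ((hA.fderiv_right le_rfl).clm_apply contDiff_const)).sub
      ((hA.of_le one_le_two).mul ((hB.fderiv_right le_rfl).clm_apply contDiff_const))
  have hdiv (x : E) : B x * Δ A x - A x * Δ B x = ∑ i, fderiv ℝ (F i) x (b i) := by
    simp only [laplacian_eq_sum_fderiv b, F, Finset.mul_sum, fderiv_mul_fderiv_sub_mul_fderiv hA hB,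
      Finset.sum_sub_distrib]
  have hrad (x : E) : B x * fderiv ℝ A x x - A x * fderiv ℝ B x x =
      ∑ i, inner ℝ x (b i) * F i x := by
    have hsum (L : E →L[ℝ] ℝ) : L x = ∑ i, inner ℝ x (b i) * L (b i) := by
      conv_lhs => rw [← b.sum_repr' x]
      simp [real_inner_comm]
    simp only [hsum, F, Finset.mul_sum, ← Finset.sum_sub_distrib]
    exact Finset.sum_congr rfl fun i _ => by ring
  simp only [hdiv, hrad, Finset.mul_sum]
  rw [integral_finsetSum, integral_finsetSum, Finset.mul_sum]
  · exact Finset.sum_congr rfl fun i _ => (integral_ballBump_mul_fderiv k (hF i) (b i)).symm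
  · exact fun i _ => integrable_ballBump_mul (k + 1)
      ((hF i).continuous_fderiv one_ne_zero |>.clm_apply continuous_const).continuousOn
  · exact fun i _ => integrable_ballBump_mul k
      (by have := (hF i).continuous; fun_prop : Continuous _).continuousOn

lemma hasDerivAt_integral_ballBump_mul (k : ℕ) {F F' : ℝ → E → ℝ} (hF : ∀ t, Continuous (F t))
    (hF' : Continuous fun p : ℝ × E => F' p.1 p.2)
    (hd : ∀ t x, HasDerivAt (fun t => F t x) (F' t x) t) (t₀ : ℝ) :
    HasDerivAt (fun t => ∫ x, ballBump (k + 1) x * F t x)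
      (∫ x, ballBump (k + 1) x * F' t₀ x) t₀ := by
  have hcompact : IsCompact (Icc (t₀ - 1) (t₀ + 1) ×ˢ closedBall (0 : E) 1) :=
    isCompact_Icc.prod (isCompact_closedBall 0 1)
  obtain ⟨C, hC⟩ := hcompact.exists_bound_of_continuousOn hF'.continuousOn
  have hF'c (t : ℝ) : Continuous (F' t) := hF'.comp (by fun_prop : Continuous fun x => (t, x))
  have hbound (x : E) (t : ℝ) (ht : t ∈ Ioo (t₀ - 1) (t₀ + 1)) :
      ‖ballBump (k + 1) x * F' t x‖ ≤ ballBump (k + 1) x * C := by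
    rw [norm_mul, Real.norm_of_nonneg (ballBump_nonneg _ _)]
    rcases le_total ‖x‖ 1 with hx | hx
    · gcongr
      · exact ballBump_nonneg _ _
      · exact hC (t, x) ⟨Ioo_subset_Icc_self ht, mem_closedBall_zero_iff.2 hx⟩
    · simp [ballBump_eq_zero hx]
  refine (hasDerivAt_integral_of_dominated_loc_of_deriv_le
    (Ioo_mem_nhds (by linarith) (by linarith))
    (Eventually.of_forall fun t => (integrable_ballBump_mul k (hF t).continuousOn).1)
    (integrable_ballBump_mul k (hF t₀).continuousOn)
    (integrable_ballBump_mul k (hF'c t₀).continuousOn).1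
    (ae_of_all _ hbound) (integrable_ballBump_mul k continuousOn_const)
    (ae_of_all _ fun x t _ => (hd t x).const_mul _)).2

end Green

section BallMean

variable {E : Type*} [NormedAddCommGroup E] [InnerProductSpace ℝ E] [FiniteDimensional ℝ E]
  [MeasurableSpace E] [BorelSpace E]

/-- The mean of `f` over the ball of center `c` and radius `r` with respect to the weight
`ballBump 2`, written in coordinates on the unit ball. -/
def ballMean (f : E → ℝ) (c : E) (r : ℝ) : ℝ :=
  (∫ x, ballBump 2 x * f (c + r • x)) / ∫ x : E, ballBump 2 x

variable (E) in
lemma integral_ballBump_two_pos : 0 < ∫ x : E, ballBump 2 x := by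
  refine (continuous_ballBump 2).integral_pos_of_hasCompactSupport_nonneg_nonzero (x := 0)
    (.intro (isCompact_closedBall 0 1) fun x hx => ballBump_eq_zero ?_) (ballBump_nonneg 2)
    (by simp [ballBump])
  rw [mem_closedBall_zero_iff, not_le] at hx
  exact hx.le

section

variable {f g : E → ℝ} {c : E} {r : ℝ}

lemma integrable_ballBump_mul_comp (hr : 0 ≤ r) (hf : ContinuousOn f (closedBall c r)) :
    Integrable fun x => ballBump 2 x * f (c + r • x) :=
  integrable_ballBump_mul 1 (hf.comp (by fun_prop) fun _ hx =>
    add_smul_mem_closedBall hr (mem_closedBall_zero_iff.1 hx))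

lemma ballMean_const (a : ℝ) (c : E) (r : ℝ) : ballMean (fun _ => a) c r = a := by
  rw [ballMean, integral_mul_const, mul_div_cancel_left₀ _ (integral_ballBump_two_pos E).ne']

lemma ballMean_mono (hr : 0 < r) (hf : ContinuousOn f (closedBall c r))
    (hg : ContinuousOn g (closedBall c r)) (h : ∀ x ∈ ball c r, f x ≤ g x) :
    ballMean f c r ≤ ballMean g c r := by
  refine div_le_div_of_nonneg_right (integral_mono (integrable_ballBump_mul_comp hr.le hf)
    (integrable_ballBump_mul_comp hr.le hg) fun x => ?_) (integral_ballBump_two_pos E).le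
  rcases lt_or_ge ‖x‖ 1 with hx | hx
  · exact mul_le_mul_of_nonneg_left (h _ (add_smul_mem_ball hr hx)) (ballBump_nonneg 2 x)
  · simp [ballBump_eq_zero hx]

lemma ballMean_congr (hr : 0 < r) (h : ∀ x ∈ ball c r, f x = g x) :
    ballMean f c r = ballMean g c r := by
  unfold ballMean
  congr 2 with x
  rcases lt_or_ge ‖x‖ 1 with hx | hx
  · rw [h _ (add_smul_mem_ball hr hx)]
  · simp [ballBump_eq_zero hx]

lemma ballMean_nonneg (hr : 0 < r) (h : ∀ x ∈ ball c r, 0 ≤ f x) : 0 ≤ ballMean f c r :=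
  div_nonneg (integral_nonneg (ballBump_mul_comp_nonneg hr h)) (integral_ballBump_two_pos E).le

lemma ballMean_const_sub (hr : 0 ≤ r) (hf : ContinuousOn f (closedBall c r)) (a : ℝ) :
    ballMean (fun x => a - f x) c r = a - ballMean f c r := by
  have hi : ∫ x, ballBump 2 x * (a - f (c + r • x)) =
      (∫ x : E, ballBump 2 x * a) - ∫ x, ballBump 2 x * f (c + r • x) := by
    simp only [mul_sub]
    exact integral_sub (integrable_ballBump_mul 1 continuousOn_const)
      (integrable_ballBump_mul_comp hr hf)
  rw [ballMean, hi, sub_div]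
  exact congrArg (· - ballMean f c r) (ballMean_const a c r)

lemma ballMean_le_of_nested (hr : 0 < r) {y : E} {s : ℝ} (hs : 0 < s)
    (hcy : dist c y + r ≤ s / 2) (hf : ContinuousOn f (closedBall y s))
    (h0 : ∀ x ∈ ball y s, 0 ≤ f x) :
    ballMean f c r ≤ 2 * (s / r) ^ finrank ℝ E * ballMean f y s := by
  let G (z : E) : ℝ := ballBump 2 z * f (y + s • z)
  let T (x : E) : E := s⁻¹ • (c - y) + (r / s) • x
  have hG : Integrable G := integrable_ballBump_mul_comp hs.le hf
  have hGT : Integrable fun x => G (T x) := (hG.comp_add_left _).comp_smul (div_pos hr hs).ne'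
  have hT (x : E) : y + s • T x = c + r • x := by
    simp only [T, smul_add, smul_smul, mul_inv_cancel₀ hs.ne', mul_div_cancel₀ r hs.ne', one_smul]
    abel
  have hTx {x : E} (hx : ‖x‖ < 1) : ‖T x‖ ≤ 1 / 2 := by
    have hmem := (dist_triangle (c + r • x) c y).trans
      (add_le_add_left (add_smul_mem_ball (c := c) hr hx).le (dist c y))
    rw [← hT, dist_self_add_left, norm_smul, Real.norm_of_nonneg hs.le] at hmem
    nlinarith
  have hle (x : E) : ballBump 2 x * f (c + r • x) ≤ 2 * G (T x) := by
    rcases lt_or_ge ‖x‖ 1 with hx | hx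
    · have hfx : 0 ≤ f (c + r • x) := by
        rw [← hT]
        exact h0 _ (add_smul_mem_ball hs ((hTx hx).trans_lt (by norm_num)))
      have := mul_le_of_le_one_left hfx (ballBump_le_one 2 x)
      have := mul_le_mul_of_nonneg_right (half_le_ballBump_two (hTx hx)) hfx
      simp only [G, hT]
      linarith
    · simpa [ballBump_eq_zero hx] using ballBump_mul_comp_nonneg hs h0 (T x)
  have hint : ∫ x, G (T x) = (s / r) ^ finrank ℝ E * ∫ z, G z := by
    rw [Measure.integral_comp_smul volume (fun x => G (s⁻¹ • (c - y) + x)) (r / s),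
      integral_add_left_eq_self, abs_of_nonneg (by positivity), smul_eq_mul, ← inv_pow, inv_div]
  rw [ballMean, ballMean, mul_div_assoc', mul_assoc, ← hint, ← integral_const_mul]
  refine div_le_div_of_nonneg_right (integral_mono (integrable_ballBump_mul_comp hr.le (hf.mono
    (closedBall_subset_closedBall' ?_))) (hGT.const_mul 2) hle) (integral_ballBump_two_pos E).le
  linarith [dist_nonneg (x := c) (y := y)]

end

lemma hasDerivAt_ballMean {U : E → ℝ} (hU : ContDiff ℝ 2 U) (c : E) (t : ℝ) :
    HasDerivAt (ballMean U c)
      ((∫ x, ballBump 2 x * fderiv ℝ U (c + t • x) x) / ∫ x : E, ballBump 2 x) t := by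
  have hU0 := hU.continuous
  have hU1 := hU.continuous_fderiv two_ne_zero
  refine (hasDerivAt_integral_ballBump_mul 1 (F := fun t x => U (c + t • x))
    (F' := fun t x => fderiv ℝ U (c + t • x) x) (by fun_prop) (by fun_prop)
    (fun t x => ?_) t).div_const _
  simpa using hasDerivAt_comp_add_smul (hU.differentiable two_ne_zero) (hasDerivAt_id t) c x

lemma monotoneOn_ballMean {U : E → ℝ} (hU : ContDiff ℝ 2 U) {c : E} {r : ℝ}
    (hΔ : ∀ x ∈ ball c r, 0 ≤ Δ U x) : MonotoneOn (ballMean U c) (Icc 0 r) := by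
  refine monotoneOn_of_deriv_nonneg (convex_Icc 0 r)
    (fun t _ => (hasDerivAt_ballMean hU c t).continuousAt.continuousWithinAt)
    (fun t _ => (hasDerivAt_ballMean hU c t).differentiableAt.differentiableWithinAt)
    fun t ht => ?_
  rw [interior_Icc] at ht
  have hgreen := green_ballBump 1 (A := fun x => U (c + t • x)) (hU.comp (by fun_prop))
    (contDiff_const (c := (1 : ℝ)))
  simp only [fderiv_comp_add_smul, laplacian_comp_add_smul hU, laplacian_const, smul_apply,
    smul_eq_mul, one_mul, fderiv_fun_const, Pi.zero_apply, zero_apply, mul_zero, sub_zero,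
    mul_left_comm _ t, mul_left_comm _ (t ^ 2), integral_const_mul] at hgreen
  have hnonneg : 0 ≤ ∫ x, ballBump 3 x * Δ U (c + t • x) := integral_nonneg
    (ballBump_mul_comp_nonneg ht.1 fun x hx => hΔ x (ball_subset_ball ht.2.le hx))
  rw [(hasDerivAt_ballMean hU c t).deriv]
  refine div_nonneg (nonneg_of_mul_nonneg_right (a := t) ?_ ht.1) (integral_ballBump_two_pos E).le
  norm_num at hgreen
  nlinarith [mul_nonneg (sq_nonneg t) hnonneg]

lemma le_ballMean {f : E → ℝ} {c : E} {r R : ℝ} (hr : 0 < r) (hrR : r < R)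
    (hf : ContDiffOn ℝ 2 f (ball c R)) (hΔ : ∀ x ∈ ball c r, 0 ≤ Δ f x) : f c ≤ ballMean f c r := by
  obtain ⟨U, hU, hUf⟩ := exists_contDiff_eqOn_closedBall hr hrR hf
  have hmono := monotoneOn_ballMean hU (c := c) (r := r) fun x hx => by
    rw [laplacian_eq_of_eqOn hUf (closedBall_mem_nhds_of_mem hx)]
    exact hΔ x hx
  calc f c = U c := (hUf (mem_closedBall_self hr.le)).symm
    _ = ballMean U c 0 := by simpa [ballMean] using (ballMean_const (U c) c 0).symm
    _ ≤ ballMean U c r := hmono (left_mem_Icc.2 hr.le) (right_mem_Icc.2 hr.le) hr.le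
    _ = ballMean f c r := ballMean_congr hr fun x hx => hUf (ball_subset_closedBall hx)

lemma ballMean_eq_of_harmonicOnNhd {f : E → ℝ} {c : E} {r R : ℝ} (hr : 0 < r) (hrR : r < R)
    (hf : HarmonicOnNhd f (ball c R)) : ballMean f c r = f c := by
  have hneg : -f c ≤ ballMean (-f) c r := le_ballMean hr hrR hf.neg.contDiffOn fun x hx =>
    ((hf.neg x (ball_subset_ball hrR.le hx)).2.eq_of_nhds).ge
  have hsub := ballMean_const_sub hr.le (hf.continuousOn.mono (closedBall_subset_ball hrR)) 0
  simp only [zero_sub] at hsub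
  refine le_antisymm (neg_le_neg_iff.1 (hneg.trans_eq hsub)) ?_
  exact le_ballMean hr hrR hf.contDiffOn fun x hx =>
    (hf x (ball_subset_ball hrR.le hx)).2.eq_of_nhds.ge

end BallMean

section ThreeBalls

variable {E : Type*} [NormedAddCommGroup E] [InnerProductSpace ℝ E] [FiniteDimensional ℝ E]
  [MeasurableSpace E] [BorelSpace E]

lemma sq_integral_ballBump_mul_le (k : ℕ) {F G : E → ℝ} (hF : ContinuousOn F (closedBall 0 1))
    (hG : ContinuousOn G (closedBall 0 1)) :
    (∫ x, ballBump (k + 1) x * (F x * G x)) ^ 2 ≤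
      (∫ x, ballBump (k + 1) x * F x ^ 2) * ∫ x, ballBump (k + 1) x * G x ^ 2 := by
  have hdiscrim : discrim (∫ x, ballBump (k + 1) x * F x ^ 2)
      (2 * ∫ x, ballBump (k + 1) x * (F x * G x)) (∫ x, ballBump (k + 1) x * G x ^ 2) ≤ 0 := by
    refine discrim_le_zero fun t => ?_
    have hexpand : ∫ x, ballBump (k + 1) x * (t * F x + G x) ^ 2 =
        (∫ x, ballBump (k + 1) x * F x ^ 2) * (t * t) +
          (2 * ∫ x, ballBump (k + 1) x * (F x * G x)) * t +
          ∫ x, ballBump (k + 1) x * G x ^ 2 := by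
      rw [← integral_const_mul, ← integral_mul_const, ← integral_mul_const, ← integral_add,
        ← integral_add]
      · exact integral_congr_ae (ae_of_all _ fun x => by ring)
      · exact ((integrable_ballBump_mul k (hF.pow 2)).mul_const _).add
          (((integrable_ballBump_mul k (hF.mul hG)).const_mul _).mul_const _)
      · exact integrable_ballBump_mul k (hG.pow 2)
      · exact (integrable_ballBump_mul k (hF.pow 2)).mul_const _
      · exact ((integrable_ballBump_mul k (hF.mul hG)).const_mul _).mul_const _
    rw [← hexpand]
    exact integral_nonneg fun x => mul_nonneg (ballBump_nonneg _ x) (sq_nonneg _)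
  unfold discrim at hdiscrim
  linarith

lemma integral_ballBump_wronskian_eq_zero {U : E → ℝ} (hU : ContDiff ℝ 2 U) {c : E} {a b R : ℝ}
    (ha : 0 < a) (hb : 0 < b) (haR : a ≤ R) (hbR : b ≤ R) (hΔ : ∀ x ∈ ball c R, Δ U x = 0) :
    ∫ x, ballBump 2 x * (U (c + b • x) * (a * fderiv ℝ U (c + a • x) x) -
      U (c + a • x) * (b * fderiv ℝ U (c + b • x) x)) = 0 := by
  have hgreen := green_ballBump 1 (A := fun x => U (c + a • x)) (B := fun x => U (c + b • x))
    (hU.comp (by fun_prop)) (hU.comp (by fun_prop))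
  have hzero (x : E) : ballBump 3 x * (U (c + b • x) * (a ^ 2 * Δ U (c + a • x)) -
      U (c + a • x) * (b ^ 2 * Δ U (c + b • x))) = 0 := by
    rcases lt_or_ge ‖x‖ 1 with hx | hx
    · rw [hΔ _ (ball_subset_ball haR (add_smul_mem_ball ha hx)),
        hΔ _ (ball_subset_ball hbR (add_smul_mem_ball hb hx))]
      ring
    · simp [ballBump_eq_zero hx]
  simp only [fderiv_comp_add_smul, laplacian_comp_add_smul hU, smul_apply, smul_eq_mul,
    hzero, integral_zero] at hgreen
  exact (mul_eq_zero.1 hgreen).resolve_left (by norm_num)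

lemma integral_ballBump_mul_comp_eq {U : E → ℝ} (hU : ContDiff ℝ 2 U) {c : E} {s l : ℝ}
    (hs : 0 < s) (hl : 1 ≤ l) (hΔ : ∀ x ∈ ball c (s * l), Δ U x = 0) :
    ∫ x, ballBump 2 x * (U (c + (s * l) • x) * U (c + (s / l) • x)) =
      ∫ x, ballBump 2 x * U (c + s • x) ^ 2 := by
  -- With radii `s * exp t` and `s * exp (-t)` in place of `s * l` and `s / l`, the `t`-derivative
  -- of the integral is the Wronskian of two dilates of `U`, which vanishes by Green's identity.
  have hU0 := hU.continuous
  have hU1 := hU.continuous_fderiv two_ne_zero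
  have hexp (t : ℝ) : HasDerivAt (fun t => s * Real.exp t) (s * Real.exp t) t :=
    (Real.hasDerivAt_exp t).const_mul s
  have hexpn (t : ℝ) : HasDerivAt (fun t => s * Real.exp (-t)) (-(s * Real.exp (-t))) t :=
    (((Real.hasDerivAt_exp (-t)).comp t (hasDerivAt_neg t)).const_mul s).congr_deriv (by ring)
  have hder (t : ℝ) := hasDerivAt_integral_ballBump_mul 1
    (F := fun t x => U (c + (s * Real.exp t) • x) * U (c + (s * Real.exp (-t)) • x))
    (F' := fun t x => U (c + (s * Real.exp (-t)) • x) *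
        (s * Real.exp t * fderiv ℝ U (c + (s * Real.exp t) • x) x) -
      U (c + (s * Real.exp t) • x) *
        (s * Real.exp (-t) * fderiv ℝ U (c + (s * Real.exp (-t)) • x) x))
    (by fun_prop) (by fun_prop) (fun t x =>
      ((hasDerivAt_comp_add_smul (hU.differentiable two_ne_zero) (hexp t) c x).mul
        (hasDerivAt_comp_add_smul (hU.differentiable two_ne_zero) (hexpn t) c x)).congr_deriv
        (by ring)) t
  have hconst := constant_of_has_deriv_right_zero (a := 0) (b := Real.log l)
    (fun t _ => (hder t).continuousAt.continuousWithinAt) (fun t ht => by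
      have hl' : Real.exp t ≤ l := by
        rw [← Real.exp_log (zero_lt_one.trans_le hl)]
        exact Real.exp_le_exp.2 ht.2.le
      have hl'' : Real.exp (-t) ≤ l := (Real.exp_le_exp.2 (by linarith [ht.1])).trans hl'
      exact ((hder t).congr_deriv (integral_ballBump_wronskian_eq_zero hU (by positivity)
        (by positivity) (by gcongr) (by gcongr) hΔ)).hasDerivWithinAt)
    (Real.log l) (right_mem_Icc.2 (Real.log_nonneg hl))
  simpa [Real.exp_neg, Real.exp_log (zero_lt_one.trans_le hl), ← div_eq_mul_inv, sq] using hconst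

lemma sq_ballMean_sq_le_mul {v : E → ℝ} {c : E} {s l R : ℝ} (hs : 0 < s) (hl : 1 ≤ l)
    (hlR : s * l < R) (hv : HarmonicOnNhd v (ball c R)) :
    ballMean (fun y => v y ^ 2) c s ^ 2 ≤
      ballMean (fun y => v y ^ 2) c (s / l) * ballMean (fun y => v y ^ 2) c (s * l) := by
  have hl0 : 0 < l := zero_lt_one.trans_le hl
  have hsl : s ≤ s * l := le_mul_of_one_le_right hs.le hl
  have hsl' : s / l ≤ s := div_le_self hs.le hl
  obtain ⟨U, hU, hUv⟩ := exists_contDiff_eqOn_closedBall (mul_pos hs hl0) hlR hv.contDiffOn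
  have hUc := hU.continuous
  have hmean {r : ℝ} (hr : 0 < r) (hrl : r ≤ s * l) : ballMean (fun y => v y ^ 2) c r =
      ballMean (fun y => U y ^ 2) c r := ballMean_congr hr fun x hx => by
    rw [hUv (closedBall_subset_closedBall hrl (ball_subset_closedBall hx))]
  rw [hmean hs hsl, hmean (div_pos hs hl0) (hsl'.trans hsl), hmean (mul_pos hs hl0) le_rfl]
  simp only [ballMean]
  rw [← integral_ballBump_mul_comp_eq hU hs hl fun x hx => ?_, div_pow, div_mul_div_comm, ← sq]
  · rw [mul_comm (∫ x, ballBump 2 x * U (c + (s / l) • x) ^ 2)]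
    gcongr
    exact sq_integral_ballBump_mul_le 1 (by fun_prop) (by fun_prop)
  · rw [laplacian_eq_of_eqOn hUv (closedBall_mem_nhds_of_mem hx)]
    exact (hv x (ball_subset_ball hlR.le hx)).2.eq_of_nhds

lemma sq_le_ballMean_sq {v : E → ℝ} {c p : E} {r s R : ℝ} (hr : 0 < r) (hs : 0 < s)
    (hsR : s < R) (hv : HarmonicOnNhd v (ball c R)) (hp : dist p c + r ≤ s / 2) :
    v p ^ 2 ≤ 2 * (s / r) ^ finrank ℝ E * ballMean (fun y => v y ^ 2) c s := by
  have hpR : ball p (r + (R - s)) ⊆ ball c R := ball_subset_ball' (by linarith)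
  refine (le_ballMean (f := fun y => v y ^ 2) hr (by linarith : r < r + (R - s))
    ((hv.mono hpR).contDiffOn.pow 2) fun y hy => ?_).trans
    (ballMean_le_of_nested hr hs hp ((hv.continuousOn.mono (closedBall_subset_ball hsR)).pow 2)
      fun y _ => sq_nonneg _)
  have hyR : y ∈ ball c R := hpR (ball_subset_ball (by linarith) hy)
  exact laplacian_comp_nonneg (ψ := fun t => t ^ 2) (by fun_prop) (hv y hyR)
    (by simp [funext fun x : ℝ => (hasDerivAt_pow 2 x).deriv])

end ThreeBalls

section Harnack

variable {E : Type*} [NormedAddCommGroup E] [InnerProductSpace ℝ E]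

variable (E) in
/-- The constant in the Harnack inequality `harnack` comparing a nonnegative harmonic function at
the center of a ball with its values on the concentric ball of one eighth of the radius. -/
def harnackConst : ℝ := 2 * 4 ^ finrank ℝ E

variable (E) in
lemma two_le_harnackConst : 2 ≤ harnackConst E := by
  have hpow : (1 : ℝ) ≤ 4 ^ finrank ℝ E := one_le_pow₀ (by norm_num)
  unfold harnackConst
  linarith

variable (E) in
lemma one_sub_inv_harnackConst_mem_Ioo : 1 - 1 / harnackConst E ∈ Ioo (0 : ℝ) 1 := by
  have hC := two_le_harnackConst E
  have hC1 : 1 / harnackConst E < 1 := by rw [div_lt_one (by linarith)]; linarith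
  exact ⟨by linarith, by linarith [show 0 < 1 / harnackConst E by positivity]⟩

variable [FiniteDimensional ℝ E] {u : E → ℝ} {p q : E} {R : ℝ}

lemma harnack (hR : 0 < R) (hu : HarmonicOnNhd u (ball q R)) (h0 : ∀ x ∈ ball q R, 0 ≤ u x)
    (hp : dist p q ≤ R / 8) : u p ≤ harnackConst E * u q := by
  borelize E
  calc u p = ballMean u p (R / 8) := (ballMean_eq_of_harmonicOnNhd (by positivity)
        (by linarith : R / 8 < R / 2) (hu.mono (ball_subset_ball' (by linarith)))).symm
    _ ≤ 2 * (R / 2 / (R / 8)) ^ finrank ℝ E * ballMean u q (R / 2) :=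
        ballMean_le_of_nested (by positivity) (by positivity) (by linarith)
          (hu.continuousOn.mono (closedBall_subset_ball (by linarith)))
          fun x hx => h0 x (ball_subset_ball (by linarith) hx)
    _ = harnackConst E * u q := by
        rw [ballMean_eq_of_harmonicOnNhd (by positivity) (by linarith) hu, harnackConst,
          show R / 2 / (R / 8) = 4 by field_simp; norm_num]

lemma harnack_symm (hR : 0 < R) (hu : HarmonicOnNhd u (ball q R)) (h0 : ∀ x ∈ ball q R, 0 ≤ u x)
    (hp : dist p q ≤ R / 16) : u q ≤ harnackConst E * u p := by
  have hsub : ball p (R / 2) ⊆ ball q R := ball_subset_ball' (by linarith)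
  exact harnack (half_pos hR) (hu.mono hsub) (fun x hx => h0 x (hsub hx))
    (by rw [dist_comm]; linarith)

lemma harnack_abs (hR : 0 < R) (hu : HarmonicOnNhd u (ball q R)) (h0 : ∀ x ∈ ball q R, u x ≠ 0)
    (hp : dist p q ≤ R / 8) : |u p| ≤ harnackConst E * |u q| := by
  have hpR : p ∈ ball q R := mem_ball.2 (by linarith)
  have hqR : q ∈ ball q R := mem_ball_self hR
  have hsign : (∀ x ∈ ball q R, 0 ≤ u x) ∨ ∀ x ∈ ball q R, u x ≤ 0 := by
    by_contra! hcon
    obtain ⟨⟨x, hx, hx0⟩, y, hy, hy0⟩ := hcon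
    obtain ⟨w, hw, hw0⟩ := (convex_ball q R).isPreconnected.intermediate_value hx hy
      hu.continuousOn ⟨hx0.le, hy0.le⟩
    exact h0 w hw hw0
  rcases hsign with h | h
  · rw [abs_of_nonneg (h p hpR), abs_of_nonneg (h q hqR)]
    exact harnack hR hu h hp
  · rw [abs_of_nonpos (h p hpR), abs_of_nonpos (h q hqR)]
    exact harnack hR hu.neg (fun x hx => neg_nonneg.2 (h x hx)) hp

variable {z : E} {S : ℝ}

lemma abs_le_of_eq_zero (hR : 0 < R) (hu : HarmonicOnNhd u (ball z R))
    (hS : ∀ x ∈ ball z R, |u x| ≤ S) (hz : u z = 0) (hp : dist p z ≤ R / 16) :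
    |u p| ≤ (1 - 1 / harnackConst E) * S := by
  have hC := two_le_harnackConst E
  have hsub : S ≤ harnackConst E * (S - u p) := by
    simpa [hz] using harnack_symm hR ((harmonicOnNhd_const S).sub hu)
      (fun x hx => sub_nonneg.2 (abs_le.1 (hS x hx)).2) hp
  have hadd : S ≤ harnackConst E * (S + u p) := by
    simpa [hz] using harnack_symm hR ((harmonicOnNhd_const S).add hu)
      (fun x hx => by linarith [(abs_le.1 (hS x hx)).1, Pi.add_apply (fun _ => S) u x]) hp
  rw [← div_le_iff₀' (by positivity)] at hsub hadd
  rw [sub_mul, one_mul, one_div_mul_eq_div, abs_le]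
  constructor <;> linarith

lemma abs_le_pow_mul_of_eq_zero (hR : 0 < R) (hu : HarmonicOnNhd u (ball z R))
    (hS : ∀ x ∈ ball z R, |u x| ≤ S) (hz : u z = 0) (k : ℕ) :
    ∀ p ∈ ball z (R / 16 ^ k), |u p| ≤ (1 - 1 / harnackConst E) ^ k * S := by
  induction k with
  | zero => simpa using hS
  | succ k ih =>
    intro p hp
    have hle : R / 16 ^ k ≤ R := div_le_self hR.le (one_le_pow₀ (by norm_num))
    rw [pow_succ' (1 - 1 / harnackConst E), mul_assoc]
    refine abs_le_of_eq_zero (R := R / 16 ^ k) (by positivity) (hu.mono (ball_subset_ball hle))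
      ih hz ?_
    rw [div_div, ← pow_succ]
    exact (mem_ball.1 hp).le

variable (E) in
lemma exists_abs_le_mul_of_eq_zero {ε : ℝ} (hε : 0 < ε) :
    ∃ κ > 0, κ ≤ 1 ∧ ∀ {u : E → ℝ} {z : E} {R S : ℝ}, 0 < R → HarmonicOnNhd u (ball z R) →
      (∀ x ∈ ball z R, |u x| ≤ S) → u z = 0 → ∀ p ∈ ball z (κ * R), |u p| ≤ ε * S := by
  obtain ⟨k, hk⟩ := exists_pow_lt_of_lt_one hε (one_sub_inv_harnackConst_mem_Ioo E).2
  refine ⟨1 / 16 ^ k, by positivity,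
    div_le_one_of_le₀ (one_le_pow₀ (by norm_num)) (by positivity), ?_⟩
  intro u z R S hR hu hS hz p hp
  rw [one_div_mul_eq_div] at hp
  exact (abs_le_pow_mul_of_eq_zero hR hu hS hz k p hp).trans
    (mul_le_mul_of_nonneg_right hk.le ((abs_nonneg _).trans (hS z (mem_ball_self hR))))

lemma exists_growth_of_eq_zero (hu : HarmonicOnNhd u (ball z R)) (hz : u z = 0)
    (hp : dist p z ≤ R / 16) (hup : u p ≠ 0) :
    ∃ y ∈ ball z R, (1 + 1 / harnackConst E) * |u p| ≤ |u y| := by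
  have hR : 0 < R := by
    by_contra! hR
    exact hup (dist_le_zero.1 (hp.trans (by linarith)) ▸ hz)
  by_contra! hcon
  have hC := two_le_harnackConst E
  have hle := abs_le_of_eq_zero hR hu (fun y hy => (hcon y hy).le) hz hp
  have hup' := abs_pos.2 hup
  have hsq : 0 < (1 / harnackConst E) ^ 2 := by positivity
  nlinarith

end Harnack

section UniqueContinuation

variable {E : Type*} [NormedAddCommGroup E] [InnerProductSpace ℝ E] [FiniteDimensional ℝ E]

lemma ballMean_sq_two_pow_mul_eq_zero [MeasurableSpace E] [BorelSpace E] {v : E → ℝ} {c : E}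
    {r R : ℝ} (hr : 0 < r) (hv : HarmonicOnNhd v (ball c R))
    (h0 : ballMean (fun y => v y ^ 2) c r = 0) (k : ℕ) (hk : 2 ^ (k + 1) * r < R) :
    ballMean (fun y => v y ^ 2) c (2 ^ k * r) = 0 := by
  induction k with
  | zero => simpa using h0
  | succ k ih =>
    have hpow : (2 : ℝ) ^ (k + 1) * r / 2 = 2 ^ k * r := by rw [pow_succ]; ring
    have hthree := sq_ballMean_sq_le_mul (s := 2 ^ (k + 1) * r) (l := 2) (by positivity)
      one_le_two (by rw [pow_succ] at hk; linarith) hv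
    rw [hpow, ih (lt_of_le_of_lt (by gcongr <;> norm_num) hk), zero_mul] at hthree
    exact pow_eq_zero_iff two_ne_zero |>.1 (le_antisymm hthree (sq_nonneg _))

lemma eq_zero_of_eq_zero_on_ball {v : E → ℝ} {c y : E} {r R : ℝ} (hr : 0 < r)
    (hv : HarmonicOnNhd v (ball c R)) (h0 : ∀ x ∈ ball c r, v x = 0) (hy : y ∈ ball c (R / 32)) :
    v y = 0 := by
  borelize E
  rcases le_or_gt R (4 * r) with hRr | hRr
  · exact h0 y (ball_subset_ball (by linarith) hy)
  obtain ⟨N, hN, hN'⟩ := exists_nat_pow_near (x := R / (4 * r)) (y := 2)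
    ((one_le_div (by positivity)).2 hRr.le) one_lt_two
  rw [le_div_iff₀ (by positivity)] at hN
  rw [div_lt_iff₀ (by positivity), pow_succ] at hN'
  have hmean : ballMean (fun x => v x ^ 2) c (2 ^ N * r) = 0 :=
    ballMean_sq_two_pow_mul_eq_zero hr hv
      (by rw [ballMean_congr (g := fun _ => 0) hr fun x hx => by simp [h0 x hx], ballMean_const])
      N (by rw [pow_succ]; linarith)
  have hsq := sq_le_ballMean_sq (p := y) (r := R / 32) (s := 2 ^ N * r) (by linarith)
    (by positivity) (by linarith) hv (by linarith [mem_ball.1 hy])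
  rw [hmean, mul_zero] at hsq
  exact pow_eq_zero_iff two_ne_zero |>.1 (le_antisymm hsq (sq_nonneg _))

variable {Ω K : Set E} {v : E → ℝ}

lemma eq_zero_of_eventuallyEq_zero (hΩ : IsOpen Ω) (hΩc : IsPreconnected Ω)
    (hv : HarmonicOnNhd v Ω) {x : E} (hx : x ∈ Ω) (h0 : v =ᶠ[𝓝 x] 0) : ∀ y ∈ Ω, v y = 0 := by
  have hclosed : closure {x | v =ᶠ[𝓝 x] 0} ∩ Ω ⊆ {x | v =ᶠ[𝓝 x] 0} := by
    rintro y ⟨hy, hyΩ⟩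
    obtain ⟨R, hR, hRΩ⟩ := Metric.isOpen_iff.1 hΩ y hyΩ
    obtain ⟨z, hz, hyz⟩ := Metric.mem_closure_iff.1 hy (R / 64) (by positivity)
    obtain ⟨r, hr, hzr⟩ := Metric.eventually_nhds_iff_ball.1 (hz : v =ᶠ[𝓝 z] 0)
    have hzR : ball z (R / 2) ⊆ Ω :=
      (ball_subset_ball' (by rw [dist_comm]; linarith)).trans hRΩ
    filter_upwards [isOpen_ball.mem_nhds (mem_ball.2 (hyz.trans_eq (by ring) :
      dist y z < R / 2 / 32))] with w hw
    exact eq_zero_of_eq_zero_on_ball hr (hv.mono hzR) hzr hw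
  exact fun y hy => (hΩc.subset_of_closure_inter_subset isOpen_setOfPred_eventually_nhds
    ⟨x, hx, h0⟩ hclosed hy : v =ᶠ[𝓝 y] 0).self_of_nhds

lemma exists_le_abs_on_ball (hΩ : IsOpen Ω) (hΩc : IsPreconnected Ω) (hK : IsCompact K)
    (hKΩ : K ⊆ Ω) (hv : HarmonicOnNhd v Ω) (hv0 : ∃ x ∈ Ω, v x ≠ 0) {ε : ℝ} (hε : 0 < ε) :
    ∃ m > 0, ∀ x ∈ K, ∃ p ∈ ball x ε, m ≤ |v p| := by
  refine hK.induction_on (p := fun s => ∃ m > 0, ∀ x ∈ s, ∃ p ∈ ball x ε, m ≤ |v p|)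
    ⟨1, one_pos, by simp⟩ ?_ ?_ fun x hx => ?_
  · rintro s t hst ⟨m, hm, h⟩
    exact ⟨m, hm, fun x hx => h x (hst hx)⟩
  · rintro s t ⟨m, hm, h⟩ ⟨m', hm', h'⟩
    refine ⟨min m m', lt_min hm hm', ?_⟩
    rintro x (hx | hx)
    · exact (h x hx).imp fun p hp => ⟨hp.1, (min_le_left _ _).trans hp.2⟩
    · exact (h' x hx).imp fun p hp => ⟨hp.1, (min_le_right _ _).trans hp.2⟩
  · obtain ⟨p, hp, hvp⟩ : ∃ p ∈ ball x (ε / 2), v p ≠ 0 := by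
      by_contra! hcon
      obtain ⟨y, hy, hvy⟩ := hv0
      exact hvy (eq_zero_of_eventuallyEq_zero hΩ hΩc hv (hKΩ hx)
        (Metric.eventually_nhds_iff_ball.2 ⟨ε / 2, half_pos hε, hcon⟩) y hy)
    refine ⟨ball x (ε / 2), mem_nhdsWithin_of_mem_nhds (ball_mem_nhds x (half_pos hε)), |v p|,
      abs_pos.2 hvp, fun y hy => ⟨p, ?_, le_rfl⟩⟩
    rw [mem_ball] at hp hy ⊢
    linarith [dist_triangle_right p y x]

end UniqueContinuation

section Doubling

lemma le_pow_mul_of_sq_le_mul {a : ℕ → ℝ} {Λ : ℝ} {N : ℕ} (h0 : ∀ k, 0 ≤ a k) (hΛ : 0 ≤ Λ)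
    (hconvex : ∀ k < N, a (k + 1) ^ 2 ≤ a k * a (k + 2)) (hlast : a (N + 1) ≤ Λ * a N) :
    ∀ k ≤ N + 1, a k ≤ Λ ^ k * a 0 := by
  have hstep (k : ℕ) (hk : k ≤ N) : a (k + 1) ≤ Λ * a k := by
    induction hk using Nat.decreasingInduction with
    | self => exact hlast
    | of_succ k hk ih =>
      rcases (h0 (k + 1)).eq_or_lt with hzero | hpos
      · rw [← hzero]
        exact mul_nonneg hΛ (h0 k)
      · refine le_of_mul_le_mul_right ?_ hpos
        calc a (k + 1) * a (k + 1) ≤ a k * a (k + 2) := by rw [← sq]; exact hconvex k hk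
          _ ≤ a k * (Λ * a (k + 1)) := mul_le_mul_of_nonneg_left ih (h0 k)
          _ = Λ * a k * a (k + 1) := by ring
  intro k hk
  induction k with
  | zero => simp
  | succ k ih =>
    calc a (k + 1) ≤ Λ * a k := hstep k (by omega)
      _ ≤ Λ * (Λ ^ k * a 0) := mul_le_mul_of_nonneg_left (ih (by omega)) hΛ
      _ = Λ ^ (k + 1) * a 0 := by ring

variable {E : Type*} [NormedAddCommGroup E] [InnerProductSpace ℝ E] [FiniteDimensional ℝ E]
  {Ω K : Set E} {v : E → ℝ}

lemma ballMean_sq_le [MeasurableSpace E] [BorelSpace E] {c : E} {r R S : ℝ} (hr : 0 < r)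
    (hrR : r < R) (hv : ContinuousOn v (ball c R)) (hS : ∀ y ∈ ball c r, |v y| ≤ S) :
    ballMean (fun y => v y ^ 2) c r ≤ S ^ 2 := by
  refine (ballMean_mono hr ((hv.mono (closedBall_subset_ball hrR)).pow 2) continuousOn_const
    fun y hy => ?_).trans_eq (ballMean_const _ _ _)
  exact sq_le_sq.2 ((hS y hy).trans (le_abs_self S))

lemma exists_ballMean_sq_two_mul_le [MeasurableSpace E] [BorelSpace E] (hΩ : IsOpen Ω)
    (hΩc : IsPreconnected Ω) (hK : IsCompact K) (hv : HarmonicOnNhd v Ω)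
    (hv0 : ∃ x ∈ Ω, v x ≠ 0) {s : ℝ} (hs : 0 < s) (hKΩ : cthickening (4 * s) K ⊆ Ω) :
    ∃ Λ ≥ 1, ∀ x ∈ K, ∀ t ∈ Icc (s / 2) s,
      ballMean (fun y => v y ^ 2) x (2 * t) ≤ Λ * ballMean (fun y => v y ^ 2) x t := by
  obtain ⟨S, hS⟩ := hK.cthickening.exists_bound_of_continuousOn (hv.continuousOn.mono hKΩ)
  obtain ⟨m, hm, hlow⟩ := exists_le_abs_on_ball hΩ hΩc hK
    ((self_subset_cthickening K).trans hKΩ) hv hv0 (show 0 < s / 8 by positivity)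
  refine ⟨max 1 (S ^ 2 / m ^ 2 * (2 * 8 ^ finrank ℝ E)), le_max_left _ _, fun x hx t ht => ?_⟩
  obtain ⟨ht1, ht2⟩ := ht
  have hball : closedBall x (4 * s) ⊆ cthickening (4 * s) K := closedBall_subset_cthickening hx _
  have hvx : HarmonicOnNhd v (ball x (4 * s)) := hv.mono (ball_subset_closedBall.trans
    (hball.trans hKΩ))
  obtain ⟨p, hp, hmp⟩ := hlow x hx
  have hmean0 : 0 ≤ ballMean (fun y => v y ^ 2) x t :=
    ballMean_nonneg (by linarith) fun y _ => sq_nonneg _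
  have hlower : m ^ 2 ≤ 2 * 8 ^ finrank ℝ E * ballMean (fun y => v y ^ 2) x t := by
    calc m ^ 2 ≤ v p ^ 2 := sq_le_sq.2 (by rwa [abs_of_pos hm])
      _ ≤ 2 * (t / (s / 8)) ^ finrank ℝ E * ballMean (fun y => v y ^ 2) x t :=
        sq_le_ballMean_sq (by positivity) (by linarith) (by linarith) hvx
          (by linarith [mem_ball.1 hp])
      _ ≤ _ := by
        have hts : t / (s / 8) ≤ 8 := by rw [div_le_iff₀ (by positivity)]; linarith
        gcongr
        exact div_nonneg (by linarith) (by linarith)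
  calc ballMean (fun y => v y ^ 2) x (2 * t) ≤ S ^ 2 :=
        ballMean_sq_le (by linarith) (by linarith) hvx.continuousOn fun y hy =>
          hS y (hball (ball_subset_closedBall (ball_subset_ball (by linarith) hy)))
    _ = S ^ 2 / m ^ 2 * m ^ 2 := by field_simp
    _ ≤ S ^ 2 / m ^ 2 * (2 * 8 ^ finrank ℝ E * ballMean (fun y => v y ^ 2) x t) := by gcongr
    _ ≤ _ := by
        rw [← mul_assoc]
        exact mul_le_mul_of_nonneg_right (le_max_right _ _) hmean0

lemma exists_ballMean_sq_two_pow_mul_le [MeasurableSpace E] [BorelSpace E] (hΩ : IsOpen Ω)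
    (hΩc : IsPreconnected Ω) (hK : IsCompact K) (hv : HarmonicOnNhd v Ω)
    (hv0 : ∃ x ∈ Ω, v x ≠ 0) {s : ℝ} (hs : 0 < s) (hKΩ : cthickening (4 * s) K ⊆ Ω) :
    ∃ Λ ≥ 1, ∀ x ∈ K, ∀ r > 0, ∀ k : ℕ, 2 ^ k * r ≤ 2 * s →
      ballMean (fun y => v y ^ 2) x (2 ^ k * r) ≤ Λ ^ k * ballMean (fun y => v y ^ 2) x r := by
  obtain ⟨Λ, hΛ, htop⟩ := exists_ballMean_sq_two_mul_le hΩ hΩc hK hv hv0 hs hKΩ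
  refine ⟨Λ, hΛ, fun x hx r hr k hk => ?_⟩
  rcases k.eq_zero_or_pos with rfl | hk0
  · simp
  have hvx : HarmonicOnNhd v (ball x (4 * s)) := hv.mono
    ((ball_subset_closedBall.trans (closedBall_subset_cthickening hx _)).trans hKΩ)
  have hrs : r ≤ s := by
    have : (2 : ℝ) ^ 1 * r ≤ 2 ^ k * r := by gcongr <;> [norm_num; exact hk0]
    linarith
  obtain ⟨N, hN, hN'⟩ := exists_nat_pow_near (x := s / r) (y := 2) ((one_le_div hr).2 hrs)
    one_lt_two
  rw [le_div_iff₀ hr] at hN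
  rw [div_lt_iff₀ hr] at hN'
  have hkN : k ≤ N + 1 := by
    by_contra! hcon
    have : (2 : ℝ) ^ (N + 1 + 1) * r ≤ 2 ^ k * r := by gcongr <;> [norm_num; exact hcon]
    rw [pow_succ] at this
    linarith
  simpa using le_pow_mul_of_sq_le_mul (a := fun j => ballMean (fun y => v y ^ 2) x (2 ^ j * r))
    (fun j => ballMean_nonneg (by positivity) fun y _ => sq_nonneg _) (by linarith)
    (fun j hj => by
      have hjN : (2 : ℝ) ^ (j + 1) * r ≤ 2 ^ N * r := by gcongr <;> [norm_num; exact hj]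
      have := sq_ballMean_sq_le_mul (s := 2 ^ (j + 1) * r) (l := 2) (by positivity) one_le_two
        (by linarith) hvx
      rwa [show (2 : ℝ) ^ (j + 1) * r / 2 = 2 ^ j * r by ring,
        show (2 : ℝ) ^ (j + 1) * r * 2 = 2 ^ (j + 2) * r by ring] at this)
    (by
      rw [pow_succ'] at hN' ⊢
      rw [mul_assoc]
      exact htop x hx _ ⟨by linarith, hN⟩) k hkN

lemma exists_doubling (hΩ : IsOpen Ω) (hΩc : IsPreconnected Ω) (hK : IsCompact K) (hKΩ : K ⊆ Ω)
    (hv : HarmonicOnNhd v Ω) (hv0 : ∃ x ∈ Ω, v x ≠ 0) :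
    ∃ C ≥ 1, ∃ Λ ≥ 1, ∃ r₀ > 0, ∀ x ∈ K, ∀ r > 0, ∀ k : ℕ, 2 ^ k * r ≤ r₀ → ∀ S,
      (∀ y ∈ ball x r, |v y| ≤ S) → ∀ y ∈ ball x (2 ^ k * r), |v y| ≤ C * Λ ^ k * S := by
  borelize E
  obtain ⟨η, hη, hηΩ⟩ := hK.exists_cthickening_subset_open hΩ hKΩ
  obtain ⟨s, hs, rfl⟩ : ∃ s > 0, 4 * s = η := ⟨η / 4, by positivity, by ring⟩
  obtain ⟨Λ, hΛ, hmean⟩ := exists_ballMean_sq_two_pow_mul_le hΩ hΩc hK hv hv0 hs hηΩ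
  have hC : 1 ≤ 2 * 4 ^ finrank ℝ E * Λ ^ 2 := by
    have h4 : (1 : ℝ) ≤ 4 ^ finrank ℝ E := one_le_pow₀ (by norm_num)
    have hΛ2 : 1 ≤ Λ ^ 2 := one_le_pow₀ hΛ
    nlinarith
  refine ⟨_, hC, Λ, hΛ, s / 2, half_pos hs, fun x hx r hr k hk S hS y hy => ?_⟩
  have hS0 : 0 ≤ S := (abs_nonneg _).trans (hS x (mem_ball_self hr))
  have hvx : HarmonicOnNhd v (ball x (4 * s)) := hv.mono
    ((ball_subset_closedBall.trans (closedBall_subset_cthickening hx _)).trans hηΩ)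
  have hk4 : (2 : ℝ) ^ (k + 2) * r = 4 * (2 ^ k * r) := by ring
  have hrk : r ≤ 2 ^ k * r := le_mul_of_one_le_left hr.le (one_le_pow₀ one_le_two)
  have hA : 1 ≤ 2 * 4 ^ finrank ℝ E * Λ ^ 2 * Λ ^ k := one_le_mul_of_one_le_of_one_le hC
    (one_le_pow₀ hΛ)
  have hsq : v y ^ 2 ≤ 2 * 4 ^ finrank ℝ E * Λ ^ 2 * Λ ^ k * S ^ 2 := by
    calc v y ^ 2 ≤ 2 * (2 ^ (k + 2) * r / (2 ^ k * r)) ^ finrank ℝ E *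
          ballMean (fun y => v y ^ 2) x (2 ^ (k + 2) * r) :=
        sq_le_ballMean_sq (by positivity) (by positivity) (by linarith) hvx
          (by linarith [mem_ball.1 hy])
      _ ≤ 2 * 4 ^ finrank ℝ E * (Λ ^ (k + 2) * S ^ 2) := by
        rw [hk4, mul_div_cancel_right₀ _ (by positivity), ← hk4]
        gcongr
        exact (hmean x hx r hr (k + 2) (by linarith)).trans (mul_le_mul_of_nonneg_left
          (ballMean_sq_le hr (by linarith) hvx.continuousOn hS) (by positivity))
      _ = _ := by ring
  refine abs_le_of_sq_le_sq (hsq.trans ?_) (by positivity)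
  rw [mul_pow]
  exact mul_le_mul_of_nonneg_right (le_self_pow₀ hA two_ne_zero) (sq_nonneg S)

end Doubling

section NodalSet

variable {E : Type*}

/-- The nodal set of `u` in `Ω`. This is `zeroSet` for functions on an arbitrary space instead of
`En n`, so on `En n` the two agree by definition. -/
def nodalSet (u : E → ℝ) (Ω : Set E) : Set E := {x ∈ Ω | u x = 0}

lemma ne_zero_of_dist_lt_infDist [PseudoMetricSpace E] {u : E → ℝ} {Ω : Set E} {x y : E}
    (hy : y ∈ Ω) (h : dist y x < infDist x (nodalSet u Ω)) : u y ≠ 0 := fun huy =>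
  h.not_ge (dist_comm y x ▸ infDist_le_dist_of_mem ⟨hy, huy⟩)

lemma infDist_nodalSet_pos [PseudoMetricSpace E] {u : E → ℝ} {Ω : Set E} (hΩ : IsOpen Ω)
    (hu : ContinuousOn u Ω) (hne : (nodalSet u Ω).Nonempty) {x : E} (hx : x ∈ Ω)
    (hux : u x ≠ 0) : 0 < infDist x (nodalSet u Ω) := by
  obtain ⟨ε, hε, h⟩ := Metric.eventually_nhds_iff_ball.1
    ((hu.continuousAt (hΩ.mem_nhds hx)).eventually_ne hux)
  exact hε.trans_le ((le_infDist hne).2 fun z hz => not_lt.1 fun hlt =>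
    h z (mem_ball'.2 hlt) hz.2)

lemma exists_abs_le_of_infDist_lt [PseudoMetricSpace E] {v : E → ℝ} {Ω K : Set E}
    (hΩ : IsOpen Ω) (hv : ContinuousOn v Ω) (hne : (nodalSet v Ω).Nonempty) (hK : IsCompact K)
    (hKΩ : K ⊆ Ω) {ε : ℝ} (hε : 0 < ε) :
    ∃ c > 0, ∀ x ∈ K, infDist x (nodalSet v Ω) < c → |v x| ≤ ε := by
  have hcompact : IsCompact (K ∩ {x | ε ≤ |v x|}) :=
    (hv.mono hKΩ).abs.upperSemicontinuousOn.isCompact_inter_preimage_Ici hK ε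
  obtain ⟨c, hc, hcle⟩ := hcompact.exists_forall_le' (continuous_infDist_pt _).continuousOn
    fun x hx => infDist_nodalSet_pos hΩ hv hne (hKΩ hx.1) (abs_pos.1 (hε.trans_le hx.2))
  exact ⟨c, hc, fun x hx hlt => not_lt.1 fun hlt' => hlt.not_ge (hcle x ⟨hx, hlt'.le⟩)⟩

variable [NormedAddCommGroup E] [InnerProductSpace ℝ E] [FiniteDimensional ℝ E]
  {Ω K : Set E} {v : E → ℝ}

lemma abs_le_of_dist_le_infDist {x y : E} (hv : HarmonicOnNhd v Ω)
    (hx : ball x (infDist x (nodalSet v Ω)) ⊆ Ω) (hd : 0 < infDist x (nodalSet v Ω))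
    (hy : dist y x ≤ infDist x (nodalSet v Ω) / 8) : |v y| ≤ harnackConst E * |v x| :=
  harnack_abs hd (hv.mono hx) (fun _ hw => ne_zero_of_dist_lt_infDist (hx hw) (mem_ball.1 hw)) hy

lemma exists_abs_le_mul_pow (hΩ : IsOpen Ω) (hΩc : IsPreconnected Ω) (hK : IsCompact K)
    (hKΩ : K ⊆ Ω) (hv : HarmonicOnNhd v Ω) (hv0 : ∃ x ∈ Ω, v x ≠ 0) :
    ∃ C ≥ 1, ∃ Λ ≥ 1, ∃ r₀ > 0, ∀ x ∈ K, 0 < infDist x (nodalSet v Ω) → ∀ k : ℕ,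
      2 ^ k * infDist x (nodalSet v Ω) ≤ r₀ →
        ∀ y ∈ ball x (2 ^ k * infDist x (nodalSet v Ω)), |v y| ≤ C * Λ ^ k * |v x| := by
  obtain ⟨C, hC, Λ, hΛ, r₀, hr₀, hdouble⟩ := exists_doubling hΩ hΩc hK hKΩ hv hv0
  obtain ⟨η, hη, hηΩ⟩ := hK.exists_thickening_subset_open hΩ hKΩ
  refine ⟨C * Λ ^ 3 * harnackConst E, ?_, Λ, hΛ, min r₀ η, lt_min hr₀ hη,
    fun x hx hd k hk y hy => ?_⟩
  · exact one_le_mul_of_one_le_of_one_le (one_le_mul_of_one_le_of_one_le hC (one_le_pow₀ hΛ))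
      (one_le_two.trans (two_le_harnackConst E))
  have hdk : infDist x (nodalSet v Ω) ≤ 2 ^ k * infDist x (nodalSet v Ω) :=
    le_mul_of_one_le_left hd.le (one_le_pow₀ one_le_two)
  have hscale : 2 ^ k * infDist x (nodalSet v Ω) =
    2 ^ (k + 3) * (infDist x (nodalSet v Ω) / 8) := by ring
  have hball : ball x (infDist x (nodalSet v Ω)) ⊆ Ω :=
    (ball_subset_ball (hdk.trans (hk.trans (min_le_right _ _)))).trans
      ((ball_subset_thickening hx η).trans hηΩ)
  calc |v y| ≤ C * Λ ^ (k + 3) * (harnackConst E * |v x|) :=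
        hdouble x hx _ (by positivity) (k + 3) (hscale ▸ hk.trans (min_le_left _ _)) _
          (fun w hw => abs_le_of_dist_le_infDist hv hball hd (mem_ball.1 hw).le) y (hscale ▸ hy)
    _ = _ := by ring

lemma exists_infDist_pow_le (hΩ : IsOpen Ω) (hΩc : IsPreconnected Ω) (hK : IsCompact K)
    (hKΩ : K ⊆ Ω) (hv : HarmonicOnNhd v Ω) (hv0 : ∃ x ∈ Ω, v x ≠ 0) :
    ∃ N : ℕ, N ≠ 0 ∧ ∃ A > 0, ∃ r₀ > 0, ∀ x ∈ K, infDist x (nodalSet v Ω) ≤ r₀ →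
      infDist x (nodalSet v Ω) ^ N ≤ A * |v x| := by
  obtain ⟨C, hC, Λ, hΛ, r₀, hr₀, hdouble⟩ := exists_abs_le_mul_pow hΩ hΩc hK hKΩ hv hv0
  obtain ⟨m, hm, hlow⟩ := exists_le_abs_on_ball hΩ hΩc hK hKΩ hv hv0 (half_pos hr₀)
  obtain ⟨N, hN⟩ := pow_unbounded_of_one_lt Λ one_lt_two
  have hN0 : N ≠ 0 := by
    rintro rfl
    linarith [pow_zero (2 : ℝ)]
  refine ⟨N, hN0, r₀ ^ N * C / m, by positivity, r₀, hr₀, fun x hx hd => ?_⟩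
  rcases (infDist_nonneg (x := x) (s := nodalSet v Ω)).eq_or_lt with hd0 | hd0
  · rw [← hd0, zero_pow hN0]
    positivity
  set d := infDist x (nodalSet v Ω)
  obtain ⟨k, hk, hk'⟩ := exists_nat_pow_near ((one_le_div hd0).2 hd) one_lt_two
  rw [le_div_iff₀ hd0] at hk
  rw [div_lt_iff₀ hd0, pow_succ] at hk'
  obtain ⟨p, hp, hmp⟩ := hlow x hx
  have hvp : |v p| ≤ C * Λ ^ k * |v x| :=
    hdouble x hx hd0 k hk p (ball_subset_ball (by linarith) hp)
  rw [div_mul_eq_mul_div, le_div_iff₀ hm]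
  calc d ^ N * m ≤ d ^ N * (C * Λ ^ k * |v x|) := by gcongr; exact hmp.trans hvp
    _ ≤ d ^ N * (C * (2 ^ N) ^ k * |v x|) := by gcongr
    _ = (2 ^ k * d) ^ N * C * |v x| := by rw [mul_pow, ← pow_mul, ← pow_mul]; ring
    _ ≤ r₀ ^ N * C * |v x| := by gcongr

end NodalSet

section Truncation

lemma indicator_connectedComponentIn_eventuallyEq {X : Type*} [TopologicalSpace X]
    [LocallyConnectedSpace X] {B : Set X} {F G : X → ℝ} {a b : ℝ} (hB : IsOpen B)
    (hG : ContinuousOn G B) (hab : a < b) (hF : ∀ w, G w ≤ b → F w = 0) (x : X) {y : X}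
    (hy : y ∈ B) :
    (connectedComponentIn {w ∈ B | a < G w} x).indicator F =ᶠ[𝓝 y] F ∨
      (connectedComponentIn {w ∈ B | a < G w} x).indicator F =ᶠ[𝓝 y] 0 := by
  have hW : IsOpen {w ∈ B | a < G w} := hG.isOpen_inter_preimage hB isOpen_Ioi
  by_cases hyx : y ∈ connectedComponentIn {w ∈ B | a < G w} x
  · left
    filter_upwards [hW.connectedComponentIn.mem_nhds hyx] with w hw using indicator_of_mem hw F
  right
  rcases lt_or_ge a (G y) with hGy | hGy
  · have hyW : y ∈ connectedComponentIn {w ∈ B | a < G w} y := mem_connectedComponentIn ⟨hy, hGy⟩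
    filter_upwards [hW.connectedComponentIn.mem_nhds hyW] with w hw
    refine indicator_of_notMem (fun hwx => hyx ?_) F
    rwa [connectedComponentIn_eq hwx, ← connectedComponentIn_eq hw]
  · filter_upwards [(hG.continuousAt (hB.mem_nhds hy)).eventually_lt_const (hGy.trans_lt hab)]
      with w hw
    simp [indicator, hF w hw.le]

lemma deriv_deriv_posPart_cube_nonneg (b t : ℝ) :
    0 ≤ deriv (deriv fun s => max (s - b) 0 ^ 3) t := by
  have hderiv (s : ℝ) : HasDerivAt (fun s => max (s - b) 0 ^ 3) (3 * max (s - b) 0 ^ 2) s :=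
    ((hasDerivAt_posPart_pow 1 (s - b)).comp_sub_const s b).congr_deriv (by norm_num)
  have hderiv2 (s : ℝ) : HasDerivAt (fun s => max (s - b) 0 ^ 2) (2 * max (s - b) 0) s :=
    ((hasDerivAt_posPart_pow 0 (s - b)).comp_sub_const s b).congr_deriv (by norm_num)
  rw [deriv_eq hderiv, ((hderiv2 t).const_mul 3).deriv]
  have : 0 ≤ max (t - b) 0 := le_max_right _ _
  positivity

variable {E : Type*} [NormedAddCommGroup E] [InnerProductSpace ℝ E] [FiniteDimensional ℝ E]

lemma contDiffAt_posPart_cube_and_laplacian_nonneg {G : E → ℝ} {y : E} (hG : HarmonicAt G y)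
    (b : ℝ) : ContDiffAt ℝ 2 (fun w => max (G w - b) 0 ^ 3) y ∧
      0 ≤ Δ (fun w => max (G w - b) 0 ^ 3) y := by
  have hψ : ContDiff ℝ 2 fun t : ℝ => max (t - b) 0 ^ 3 :=
    (contDiff_posPart_pow 2).comp (contDiff_id.sub contDiff_const)
  exact ⟨hψ.contDiffAt.comp y hG.1,
    laplacian_comp_nonneg (ψ := fun t => max (t - b) 0 ^ 3) hψ hG
      (deriv_deriv_posPart_cube_nonneg b (G y))⟩

lemma contDiffOn_truncation_and_laplacian_nonneg {B : Set E} {G : E → ℝ} {a b : ℝ}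
    (hB : IsOpen B) (hG : HarmonicOnNhd G B) (hab : a < b) (x : E) {f : E → ℝ}
    (hf : f = (connectedComponentIn {w ∈ B | a < G w} x).indicator
      fun w => max (G w - b) 0 ^ 3) :
    ContDiffOn ℝ 2 f B ∧ ∀ y ∈ B, 0 ≤ Δ f y := by
  suffices h : ∀ y ∈ B, ContDiffAt ℝ 2 f y ∧ 0 ≤ Δ f y from
    ⟨fun y hy => (h y hy).1.contDiffWithinAt, fun y hy => (h y hy).2⟩
  intro y hy
  rcases indicator_connectedComponentIn_eventuallyEq (F := fun w => max (G w - b) 0 ^ 3) hB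
    hG.continuousOn hab (fun w hw => by simp [hw]) x hy with h | h <;> rw [← hf] at h
  · rw [(laplacian_congr_nhds h).eq_of_nhds]
    obtain ⟨hcont, hΔ⟩ := contDiffAt_posPart_cube_and_laplacian_nonneg (hG y hy) b
    exact ⟨hcont.congr_of_eventuallyEq h, hΔ⟩
  · rw [(laplacian_congr_nhds h).eq_of_nhds]
    exact ⟨contDiffAt_const.congr_of_eventuallyEq h, (harmonicAt_const 0).2.eq_of_nhds.ge⟩

lemma le_mul_of_laplacian_nonneg {f : E → ℝ} {x z : E} {s τ M R : ℝ} (hτ : 0 < τ)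
    (hz : dist z x + τ ≤ s / 2) (hsR : s < R) (hf : ContDiffOn ℝ 2 f (ball x R))
    (hΔ : ∀ y ∈ ball x R, 0 ≤ Δ f y) (hM : ∀ y ∈ ball x R, f y ≤ M)
    (h0 : ∀ y ∈ ball z τ, f y ≤ 0) :
    f x ≤ (1 - 1 / (2 * (s / τ) ^ finrank ℝ E)) * M := by
  borelize E
  have hs : 0 < s := by linarith [dist_nonneg (x := z) (y := x)]
  have hxs : ball x s ⊆ ball x R := ball_subset_ball hsR.le
  have hfs : ContinuousOn f (closedBall x s) :=
    hf.continuousOn.mono (closedBall_subset_ball hsR)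
  have hzx : closedBall z τ ⊆ closedBall x s := closedBall_subset_closedBall' (by linarith)
  have hmean : M ≤ 2 * (s / τ) ^ finrank ℝ E * (M - f x) := by
    calc M = ballMean (fun _ => M) z τ := (ballMean_const M z τ).symm
      _ ≤ ballMean (fun y => M - f y) z τ :=
        ballMean_mono hτ continuousOn_const (continuousOn_const.sub (hfs.mono hzx))
          fun y hy => by linarith [h0 y hy]
      _ ≤ 2 * (s / τ) ^ finrank ℝ E * ballMean (fun y => M - f y) x s :=
        ballMean_le_of_nested hτ hs hz (continuousOn_const.sub hfs) fun y hy =>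
          sub_nonneg.2 (hM y (hxs hy))
      _ ≤ _ := by
        rw [ballMean_const_sub hs.le hfs]
        gcongr
        exact le_ballMean hs hsR hf fun y hy => hΔ y (hxs hy)
  rw [← div_le_iff₀' (by positivity)] at hmean
  rw [sub_mul, one_mul, one_div_mul_eq_div]
  linarith

lemma exists_growth_on_component {G : E → ℝ} {x z : E} {s τ δ R : ℝ} (hτ : 0 < τ)
    (hz : dist z x + τ ≤ s / 2) (hsR : s < R) (hG : HarmonicOnNhd G (ball x R)) (hGx : 0 < G x)
    (hlow : ∀ y ∈ ball z τ, G y ≤ G x / 2) (hδ0 : 0 ≤ δ)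
    (hδ : (1 - 1 / (2 * (s / τ) ^ finrank ℝ E)) * (1 + 4 * δ) ^ 3 < 1) :
    ∃ y ∈ connectedComponentIn {y ∈ ball x R | G x / 2 < G y} x, (1 + δ) * G x ≤ G y := by
  -- Otherwise `G < (1 + δ) * G x` on the component `D` of `x`. Cutting `G` off outside `D` leaves a
  -- subsolution that vanishes near `z`, so it cannot be nearly maximal at the center `x`.
  by_contra! hcon
  set D := connectedComponentIn {y ∈ ball x R | G x / 2 < G y} x
  set f : E → ℝ := D.indicator fun w => max (G w - 3 / 4 * G x) 0 ^ 3 with hf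
  have hxD : x ∈ D := mem_connectedComponentIn
    ⟨mem_ball_self (by linarith [dist_nonneg (x := z) (y := x)]), by linarith⟩
  obtain ⟨hf2, hΔ⟩ := contDiffOn_truncation_and_laplacian_nonneg isOpen_ball hG
    (show G x / 2 < 3 / 4 * G x by linarith) x hf
  have hfx : f x = (G x / 4) ^ 3 := by
    rw [hf, indicator_of_mem hxD, max_eq_left (by linarith)]
    ring
  have hfM (y : E) : f y ≤ ((1 + 4 * δ) * (G x / 4)) ^ 3 := by
    refine indicator_apply_le' (fun hy => ?_) fun _ => by positivity
    exact pow_le_pow_left₀ (le_max_right _ _)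
      (max_le (by linarith [hcon y hy]) (by positivity)) 3
  have hfz (y : E) (hy : y ∈ ball z τ) : f y ≤ 0 := by
    refine (indicator_of_notMem (fun hyD => ?_) _).le
    exact (hlow y hy).not_gt (connectedComponentIn_subset _ _ hyD).2
  have hle := le_mul_of_laplacian_nonneg hτ hz hsR hf2 hΔ (fun y _ => hfM y) hfz
  rw [hfx, mul_pow, ← mul_assoc] at hle
  exact hle.not_gt (mul_lt_of_lt_one_left (by positivity) hδ)

end Truncation

section HarnackChain

lemma abs_sub_le_of_cover {X ι : Type*} [PseudoMetricSpace X] {D : Set X} (hD : IsPreconnected D)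
    {f : X → ℝ} (hf : ContinuousOn f D) (t : Finset ι) (c : ι → X) {r h : ℝ}
    (hcov : D ⊆ ⋃ i ∈ t, ball (c i) r) (hh : 0 ≤ h)
    (hosc : ∀ p ∈ D, ∀ q ∈ D, dist p q < 2 * r → |f p - f q| ≤ h) {p q : X} (hp : p ∈ D)
    (hq : q ∈ D) : |f p - f q| ≤ t.card * h := by
  -- The interval from `f q` to `f p` lies in the image of `D`, covered by `t.card` sets of
  -- diameter at most `h`; now compare Lebesgue measures.
  have hpq : uIcc (f q) (f p) ⊆ ⋃ i ∈ t, f '' (D ∩ ball (c i) r) := by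
    intro a ha
    obtain ⟨y, hy, rfl⟩ := (hD.image f hf).ordConnected.uIcc_subset (mem_image_of_mem f hq)
      (mem_image_of_mem f hp) ha
    obtain ⟨i, hi, hyi⟩ := mem_iUnion₂.1 (hcov hy)
    exact mem_iUnion₂.2 ⟨i, hi, mem_image_of_mem f ⟨hy, hyi⟩⟩
  have hdiam (i : ι) : volume (f '' (D ∩ ball (c i) r)) ≤ ENNReal.ofReal h := by
    refine (Real.volume_le_diam _).trans (ediam_le ?_)
    rintro _ ⟨y, ⟨hyD, hy⟩, rfl⟩ _ ⟨w, ⟨hwD, hw⟩, rfl⟩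
    rw [edist_dist, Real.dist_eq]
    refine ENNReal.ofReal_le_ofReal (hosc y hyD w hwD ?_)
    linarith [dist_triangle_right y w (c i), mem_ball.1 hy, mem_ball.1 hw]
  have hvol : volume (uIcc (f q) (f p)) ≤ ENNReal.ofReal (t.card * h) := by
    calc volume (uIcc (f q) (f p)) ≤ ∑ i ∈ t, volume (f '' (D ∩ ball (c i) r)) :=
          (measure_mono hpq).trans (measure_biUnion_finset_le _ _)
      _ ≤ ∑ _i ∈ t, ENNReal.ofReal h := Finset.sum_le_sum fun i _ => hdiam i
      _ = ENNReal.ofReal (t.card * h) := by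
        rw [Finset.sum_const, ← ENNReal.ofReal_nsmul, nsmul_eq_mul]
  rwa [Real.volume_interval, ENNReal.ofReal_le_ofReal_iff (by positivity)] at hvol

lemma exists_finset_ball_subset_iUnion (E : Type*) [NormedAddCommGroup E] [NormedSpace ℝ E]
    [ProperSpace E] {ε : ℝ} (hε : 0 < ε) :
    ∃ t : Finset E, ∀ (x : E) {r : ℝ}, 0 < r → ball x r ⊆ ⋃ i ∈ t, ball (x + r • i) (r * ε) := by
  obtain ⟨t, -, ht, hcov⟩ := (isCompact_closedBall (0 : E) 1).finite_cover_balls hε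
  refine ⟨ht.toFinset, fun x r hr p hp => ?_⟩
  rw [mem_ball, dist_eq_norm] at hp
  have hmem : r⁻¹ • (p - x) ∈ closedBall (0 : E) 1 := by
    rw [mem_closedBall_zero_iff, norm_smul, norm_inv, Real.norm_of_nonneg hr.le,
      inv_mul_le_iff₀ hr, mul_one]
    exact hp.le
  obtain ⟨i, hi, hpi⟩ := mem_iUnion₂.1 (hcov hmem)
  refine mem_iUnion₂.2 ⟨i, ht.mem_toFinset.2 hi, ?_⟩
  rw [mem_ball, dist_eq_norm] at hpi ⊢
  have hscale : p - (x + r • i) = r • (r⁻¹ • (p - x) - i) := by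
    rw [smul_sub, smul_inv_smul₀ hr.ne', sub_sub]
  rw [hscale, norm_smul, Real.norm_of_nonneg hr.le]
  exact mul_lt_mul_of_pos_left hpi hr

lemma exists_harnack_chain (E : Type*) [NormedAddCommGroup E] [InnerProductSpace ℝ E]
    [FiniteDimensional ℝ E] {κ : ℝ} (hκ : 0 < κ) :
    ∃ C : ℝ, 1 ≤ C ∧ ∀ {u : E → ℝ} {x : E} {r : ℝ} {D : Set E}, 0 < r → IsPreconnected D →
      D ⊆ ball x r → (∀ p ∈ D, HarmonicOnNhd u (ball p (κ * r))) →
        (∀ p ∈ D, ∀ w ∈ ball p (κ * r), u w ≠ 0) → ∀ p ∈ D, ∀ q ∈ D, |u p| ≤ C * |u q| := by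
  have hlog : 0 ≤ Real.log (harnackConst E) :=
    Real.log_nonneg (one_le_two.trans (two_le_harnackConst E))
  have hC := two_le_harnackConst E
  obtain ⟨t, ht⟩ := exists_finset_ball_subset_iUnion E (show 0 < κ / 16 by positivity)
  refine ⟨Real.exp (t.card * Real.log (harnackConst E)), Real.one_le_exp (by positivity),
    fun {u x r D} hr hD hDx hu h0 p hp q hq => ?_⟩
  have hκr : 0 < κ * r := mul_pos hκ hr
  have hpos (y : E) (hy : y ∈ D) : 0 < |u y| := abs_pos.2 (h0 y hy y (mem_ball_self hκr))
  have hcont : ContinuousOn (fun y => Real.log |u y|) D :=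
    ContinuousOn.log (fun y hy => (hu y hy y (mem_ball_self hκr)).1.continuousAt.abs
      |>.continuousWithinAt) fun y hy => (hpos y hy).ne'
  have hle (y : E) (hy : y ∈ D) (w : E) (hw : w ∈ D) (hyw : dist y w < 2 * (r * (κ / 16))) :
      Real.log |u y| ≤ Real.log (harnackConst E) + Real.log |u w| := by
    rw [← Real.log_mul (by positivity) (hpos w hw).ne']
    exact Real.log_le_log (hpos y hy) (harnack_abs hκr (hu w hw) (h0 w hw) (by linarith))
  have hosc := abs_sub_le_of_cover hD hcont t (fun i => x + r • i) (hDx.trans (ht x hr)) hlog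
    (fun y hy w hw hyw => abs_sub_le_iff.2 ⟨by linarith [hle y hy w hw hyw],
      by linarith [hle w hw y hy (dist_comm y w ▸ hyw)]⟩) hp hq
  rw [← Real.exp_log (hpos p hp), ← Real.exp_log (hpos q hq), ← Real.exp_add]
  exact Real.exp_le_exp.2 (by linarith [(abs_le.1 hosc).2])

end HarnackChain

section GrowthWithControl

lemma exists_pos_mul_one_add_pow_lt_one {a : ℝ} (ha : a < 1) :
    ∃ δ > 0, a * (1 + 4 * δ) ^ 3 < 1 := by
  have hcont : Continuous fun δ : ℝ => a * (1 + 4 * δ) ^ 3 := by fun_prop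
  have hev : ∀ᶠ δ in 𝓝[>] (0 : ℝ), a * (1 + 4 * δ) ^ 3 < 1 :=
    (hcont.continuousAt.eventually_lt_const (by simpa using ha)).filter_mono
      nhdsWithin_le_nhds
  obtain ⟨δ, hδ, hδ0⟩ := (hev.and self_mem_nhdsWithin).exists
  exact ⟨δ, hδ0, hδ⟩

variable {E : Type*} [NormedAddCommGroup E] [InnerProductSpace ℝ E] [FiniteDimensional ℝ E]
  {Ω K : Set E} {v : E → ℝ}

lemma exists_harmonicOnNhd_eq_abs (hv : HarmonicOnNhd v Ω) (x : E) :
    ∃ G : E → ℝ, HarmonicOnNhd G Ω ∧ G x = |v x| ∧ ∀ y, G y ≤ |v y| := by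
  rcases abs_choice (v x) with h | h
  · exact ⟨v, hv, h.symm, fun y => le_abs_self _⟩
  · exact ⟨fun y => -v y, fun y hy => (hv y hy).neg, h.symm, fun y => neg_le_abs _⟩

lemma exists_abs_le_half_near_nodalSet (hΩ : IsOpen Ω) (hΩc : IsPreconnected Ω)
    (hK : IsCompact K) (hKΩ : K ⊆ Ω) (hv : HarmonicOnNhd v Ω) (hv0 : ∃ x ∈ Ω, v x ≠ 0) :
    ∃ κ > 0, κ ≤ 1 ∧ ∃ r₀ > 0, ∀ x ∈ K, 0 < infDist x (nodalSet v Ω) →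
      infDist x (nodalSet v Ω) ≤ r₀ → ∀ z ∈ nodalSet v Ω,
        dist z x < 32 * infDist x (nodalSet v Ω) →
          ∀ y ∈ ball z (κ * infDist x (nodalSet v Ω)), |v y| ≤ |v x| / 2 := by
  obtain ⟨C, hC, Λ, hΛ, r₀, hr₀, hbound⟩ := exists_abs_le_mul_pow hΩ hΩc hK hKΩ hv hv0
  obtain ⟨η, hη, hηΩ⟩ := hK.exists_thickening_subset_open hΩ hKΩ
  obtain ⟨κ, hκ, hκ1, hsmall⟩ :=
    exists_abs_le_mul_of_eq_zero E (show 0 < 1 / (2 * (C * Λ ^ 6)) by positivity)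
  refine ⟨κ, hκ, hκ1, min r₀ η / 64, by positivity, fun x hx hd hdr z hz hzx y hy => ?_⟩
  set d := infDist x (nodalSet v Ω)
  have hdr₀ : 2 ^ 6 * d ≤ r₀ := by linarith [min_le_left r₀ η]
  have hdη : 2 ^ 6 * d ≤ η := by linarith [min_le_right r₀ η]
  have hzsub : ball z (32 * d) ⊆ ball x (2 ^ 6 * d) := ball_subset_ball' (by linarith)
  have hxΩ : ball x (2 ^ 6 * d) ⊆ Ω :=
    (ball_subset_ball hdη).trans ((ball_subset_thickening hx η).trans hηΩ)
  calc |v y| ≤ 1 / (2 * (C * Λ ^ 6)) * (C * Λ ^ 6 * |v x|) :=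
        hsmall (by positivity) (hv.mono (hzsub.trans hxΩ))
          (fun w hw => hbound x hx hd 6 hdr₀ w (hzsub hw)) hz.2 y
          (ball_subset_ball (by nlinarith) hy)
    _ = |v x| / 2 := by field_simp

lemma exists_growth_with_control (hΩ : IsOpen Ω) (hΩc : IsPreconnected Ω) (hK : IsCompact K)
    (hKΩ : K ⊆ Ω) (hv : HarmonicOnNhd v Ω) (hv0 : ∃ x ∈ Ω, v x ≠ 0)
    (hne : (nodalSet v Ω).Nonempty) :
    ∃ δ > 0, ∃ C ≥ 1, ∃ r₀ > 0, ∀ u : E → ℝ, HarmonicOnNhd u Ω → nodalSet u Ω = nodalSet v Ω →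
      ∀ x ∈ K, v x ≠ 0 → infDist x (nodalSet v Ω) ≤ r₀ →
        ∃ y ∈ ball x (16 * infDist x (nodalSet v Ω)),
          (1 + δ) * |v x| ≤ |v y| ∧ |u x| ≤ C * |u y| := by
  obtain ⟨κ, hκ, hκ1, r₀, hr₀, hhalf⟩ := exists_abs_le_half_near_nodalSet hΩ hΩc hK hKΩ hv hv0
  obtain ⟨η, hη, hηΩ⟩ := hK.exists_thickening_subset_open hΩ hKΩ
  obtain ⟨C, hC, hchain⟩ := exists_harnack_chain E (show 0 < κ / 16 by positivity)
  obtain ⟨δ, hδ, hδ1⟩ := exists_pos_mul_one_add_pow_lt_one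
    (show 1 - 1 / (2 * (8 / κ) ^ finrank ℝ E) < 1 from sub_lt_self _ (by positivity))
  refine ⟨δ, hδ, C, hC, min r₀ (η / 17), by positivity, fun u hu huv x hx hvx hd => ?_⟩
  have hd0 := infDist_nodalSet_pos hΩ hv.continuousOn hne (hKΩ hx) hvx
  have hxhalf := hhalf x hx hd0 (hd.trans (min_le_left _ _))
  set d := infDist x (nodalSet v Ω)
  have hxΩ : ball x (17 * d) ⊆ Ω :=
    (ball_subset_ball (by linarith [min_le_right r₀ (η / 17)])).trans
      ((ball_subset_thickening hx η).trans hηΩ)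
  obtain ⟨z, hz, hxz⟩ := (infDist_lt_iff hne).1 (show infDist x (nodalSet v Ω) < 2 * d by linarith)
  rw [dist_comm] at hxz
  obtain ⟨G, hG, hGx, hGv⟩ := exists_harmonicOnNhd_eq_abs hv x
  have hGpos : 0 < G x := hGx ▸ abs_pos.2 hvx
  have hκd : κ * d ≤ d := mul_le_of_le_one_left hd0.le hκ1
  obtain ⟨y, hyD, hy⟩ := exists_growth_on_component (z := z) (s := 8 * d) (τ := κ * d)
    (R := 16 * d) (by positivity) (by linarith) (by linarith)
    (hG.mono ((ball_subset_ball (by linarith)).trans hxΩ)) hGpos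
    (fun y hy => hGx ▸ (hGv y).trans (hxhalf z hz (by linarith) y hy)) hδ.le
    (by rwa [mul_div_mul_right _ _ hd0.ne'])
  have hDx := connectedComponentIn_subset {y ∈ ball x (16 * d) | G x / 2 < G y} x
  have hpκ (p : E) (hp : p ∈ ball x (16 * d)) : ball p (κ / 16 * (16 * d)) ⊆ ball x (17 * d) :=
    ball_subset_ball' (by linarith [mem_ball.1 hp])
  refine ⟨y, (hDx hyD).1, hGx ▸ hy.trans (hGv y),
    hchain (by positivity) isPreconnected_connectedComponentIn (fun p hp => (hDx hp).1)
      (fun p hp => hu.mono ((hpκ p (hDx hp).1).trans hxΩ)) (fun p hp w hw huw => ?_) x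
      (mem_connectedComponentIn ⟨mem_ball_self (by positivity), by linarith⟩) y hyD⟩
  have hwx := hpκ p (hDx hp).1 hw
  have hpw : |v p| ≤ |v x| / 2 := hxhalf w (huv ▸ ⟨hxΩ hwx, huw⟩)
    (by linarith [mem_ball.1 hwx]) p (mem_ball'.2 (by linarith [mem_ball.1 hw]))
  linarith [hGv p, (hDx hp).2]

end GrowthWithControl

section Iteration

lemma exists_mem_inter_of_growth {X : Type*} [PseudoMetricSpace X] {s T : Set X} {g ψ : X → ℝ}
    {q : ℝ} {x : X} (hq : 1 < q) (hx : x ∈ s) (hgx : 0 < g x) (hbdd : BddAbove (g '' s))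
    (hstep : ∀ y ∈ s, y ∉ T → g x ≤ g y → dist y x ≤ ψ x - ψ y →
      ∃ w ∈ s, dist w y ≤ ψ y - ψ w ∧ q * g y ≤ g w) :
    ∃ y ∈ s ∩ T, g x ≤ g y := by
  -- Otherwise the step can be repeated forever, since the bounds on the steps telescope to a bound
  -- on the distance from `x`; but then `g` grows geometrically.
  by_contra! hcon
  have horbit (k : ℕ) : ∃ y ∈ s, dist y x ≤ ψ x - ψ y ∧ q ^ k * g x ≤ g y := by
    induction k with
    | zero => exact ⟨x, hx, by simp, by simp⟩
    | succ k ih =>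
      obtain ⟨y, hy, hyx, hgy⟩ := ih
      have hxy : g x ≤ g y := (le_mul_of_one_le_left hgx.le (one_le_pow₀ hq.le)).trans hgy
      obtain ⟨w, hw, hwy, hgw⟩ := hstep y hy (fun hyT => (hcon y ⟨hy, hyT⟩).not_ge hxy) hxy hyx
      refine ⟨w, hw, by linarith [dist_triangle w y x], le_trans ?_ hgw⟩
      rw [pow_succ', mul_assoc]
      gcongr
  obtain ⟨S, hS⟩ := hbdd
  obtain ⟨k, hk⟩ := pow_unbounded_of_one_lt (S / g x) hq
  obtain ⟨y, hy, -, hgy⟩ := horbit k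
  rw [div_lt_iff₀ hgx] at hk
  exact (hk.trans_le hgy).not_ge (hS (mem_image_of_mem g hy))

lemma exists_mul_rpow_le_mul_sub {q α a : ℝ} (hq : 1 < q) (hα : 0 < α) (ha : 0 < a) :
    ∃ B > 0, ∀ {s t : ℝ}, 0 ≤ s → q * s ≤ t → a * t ^ α ≤ B * t ^ α - B * s ^ α := by
  have hqα : 0 < q ^ α - 1 := sub_pos.2 (Real.one_lt_rpow hq hα)
  refine ⟨a * q ^ α / (q ^ α - 1), by positivity, fun {s t} hs hst => ?_⟩
  have hpow : q ^ α * s ^ α ≤ t ^ α := by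
    rw [← Real.mul_rpow (by linarith) hs]
    exact Real.rpow_le_rpow (by positivity) hst hα.le
  rw [← mul_sub, div_mul_eq_mul_div, le_div_iff₀ hqα, mul_assoc, mul_assoc]
  exact mul_le_mul_of_nonneg_left (by linarith) ha.le

lemma exists_pos_mul_rpow_le {α η : ℝ} (hα : 0 < α) (hη : 0 < η) (B : ℝ) :
    ∃ τ > 0, B * τ ^ α ≤ η := by
  have hcont : ContinuousAt (fun τ : ℝ => B * τ ^ α) 0 :=
    continuousAt_const.mul (Real.continuousAt_rpow_const 0 α (Or.inr hα.le))
  have hev : ∀ᶠ τ in 𝓝[>] (0 : ℝ), B * τ ^ α < η :=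
    (hcont.eventually_lt_const (by simpa [hα.ne'] using hη)).filter_mono nhdsWithin_le_nhds
  obtain ⟨τ, hτη, hτ⟩ := (hev.and self_mem_nhdsWithin).exists
  exact ⟨τ, hτ, hτη.le⟩

lemma le_rpow_inv_natCast_of_pow_le {d t : ℝ} {N : ℕ} (hd : 0 ≤ d) (hN : N ≠ 0)
    (h : d ^ N ≤ t) : d ≤ t ^ (N : ℝ)⁻¹ := by
  rw [← Real.pow_rpow_inv_natCast hd hN]
  exact Real.rpow_le_rpow (by positivity) h (by positivity)

end Iteration

section WeightedBound

variable {E : Type*} [NormedAddCommGroup E] [InnerProductSpace ℝ E] [FiniteDimensional ℝ E]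
  {Ω K L : Set E} {v : E → ℝ}

lemma exists_weighted_growth (hΩ : IsOpen Ω) (hΩc : IsPreconnected Ω) (hK : IsCompact K)
    (hKΩ : K ⊆ Ω) (hv : HarmonicOnNhd v Ω) (hv0 : ∃ x ∈ Ω, v x ≠ 0)
    (hne : (nodalSet v Ω).Nonempty) :
    ∃ β : ℕ, β ≠ 0 ∧ ∃ α > (0 : ℝ), ∃ B > 0, ∃ r₀ > 0, ∀ u : E → ℝ,
      HarmonicOnNhd u Ω → nodalSet u Ω = nodalSet v Ω → ∀ x ∈ K, v x ≠ 0 →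
        infDist x (nodalSet v Ω) ≤ r₀ → ∃ y ∈ ball x (16 * infDist x (nodalSet v Ω)),
          dist y x ≤ B * |v y| ^ α - B * |v x| ^ α ∧
            2 * (|u x| * |v x| ^ β) ≤ |u y| * |v y| ^ β := by
  obtain ⟨δ, hδ, C, hC, r₀, hr₀, hgrowth⟩ := exists_growth_with_control hΩ hΩc hK hKΩ hv hv0 hne
  obtain ⟨N, hN, A, hA, r₁, hr₁, hpow⟩ := exists_infDist_pow_le hΩ hΩc hK hKΩ hv hv0
  obtain ⟨β, hβ⟩ := pow_unbounded_of_one_lt (2 * C) (show 1 < 1 + δ by linarith)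
  have hα : 0 < (N : ℝ)⁻¹ := by positivity
  obtain ⟨B, hB, hBle⟩ := exists_mul_rpow_le_mul_sub (show 1 < 1 + δ by linarith) hα
    (show 0 < 16 * A ^ (N : ℝ)⁻¹ by positivity)
  refine ⟨β, ?_, (N : ℝ)⁻¹, hα, B, hB, min r₀ r₁, lt_min hr₀ hr₁, fun u hu huv x hx hvx hd => ?_⟩
  · rintro rfl
    linarith [pow_zero (1 + δ)]
  obtain ⟨y, hy, hvy, huy⟩ := hgrowth u hu huv x hx hvx (hd.trans (min_le_left _ _))
  refine ⟨y, hy, ?_, ?_⟩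
  · have hvxy : |v x| ≤ |v y| := (le_mul_of_one_le_left (abs_nonneg _) (by linarith)).trans hvy
    calc dist y x ≤ 16 * infDist x (nodalSet v Ω) := (mem_ball.1 hy).le
      _ ≤ 16 * (A * |v x|) ^ (N : ℝ)⁻¹ := by
        gcongr
        exact le_rpow_inv_natCast_of_pow_le infDist_nonneg hN
          (hpow x hx (hd.trans (min_le_right _ _)))
      _ = 16 * A ^ (N : ℝ)⁻¹ * |v x| ^ (N : ℝ)⁻¹ := by
        rw [Real.mul_rpow hA.le (abs_nonneg _), mul_assoc]
      _ ≤ 16 * A ^ (N : ℝ)⁻¹ * |v y| ^ (N : ℝ)⁻¹ := by gcongr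
      _ ≤ B * |v y| ^ (N : ℝ)⁻¹ - B * |v x| ^ (N : ℝ)⁻¹ := hBle (abs_nonneg _) hvy
  · calc 2 * (|u x| * |v x| ^ β) ≤ 2 * (C * |u y| * |v x| ^ β) := by gcongr
      _ = |u y| * (2 * C * |v x| ^ β) := by ring
      _ ≤ |u y| * ((1 + δ) ^ β * |v x| ^ β) := by gcongr
      _ = |u y| * ((1 + δ) * |v x|) ^ β := by rw [mul_pow]
      _ ≤ |u y| * |v y| ^ β := by gcongr

lemma exists_abs_mul_abs_pow_le (hΩ : IsOpen Ω) (hΩc : IsPreconnected Ω) (hK : IsCompact K)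
    (hL : IsOpen L) (hKL : K ⊆ L) (hLΩ : L ⊆ Ω) (hv : HarmonicOnNhd v Ω)
    (hv0 : ∃ x ∈ Ω, v x ≠ 0) (hne : (nodalSet v Ω).Nonempty) :
    ∃ β : ℕ, β ≠ 0 ∧ ∃ A > 0, ∃ c > 0, ∀ u : E → ℝ, HarmonicOnNhd u Ω →
      nodalSet u Ω = nodalSet v Ω → ∀ m ≥ 0,
        (∀ y ∈ L, c ≤ infDist y (nodalSet v Ω) → |u y| ≤ m) →
          ∀ x ∈ K, |u x| * |v x| ^ β ≤ A * m := by
  obtain ⟨η, hη, hηL⟩ := hK.exists_cthickening_subset_open hL hKL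
  have hηΩ := hηL.trans hLΩ
  have hKη : IsCompact (cthickening η K) := hK.cthickening
  obtain ⟨β, hβ, α, hα, B, hB, r₀, hr₀, hgrowth⟩ :=
    exists_weighted_growth hΩ hΩc hKη hηΩ hv hv0 hne
  obtain ⟨ε, hε, hBε⟩ := exists_pos_mul_rpow_le hα (half_pos hη) B
  obtain ⟨c, hc, hsmall⟩ := exists_abs_le_of_infDist_lt hΩ hv.continuousOn hne hKη hηΩ hε
  obtain ⟨S, hS⟩ := hKη.exists_bound_of_continuousOn (hv.continuousOn.mono hηΩ)
  refine ⟨β, hβ, max S 1 ^ β, by positivity, min c (min r₀ (η / 32)), by positivity,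
    fun u hu huv m hm hum x hx => ?_⟩
  rcases (show 0 ≤ |u x| * |v x| ^ β by positivity).eq_or_lt with hux | hux
  · rw [← hux]
    positivity
  obtain ⟨y, ⟨hyη, hyc⟩, hxy⟩ : ∃ y ∈ cthickening η K ∩
      {y | min c (min r₀ (η / 32)) ≤ infDist y (nodalSet v Ω)},
        |u x| * |v x| ^ β ≤ |u y| * |v y| ^ β := by
    have hbdd := hKη.bddAbove_image
      ((hu.continuousOn.mono hηΩ).abs.mul ((hv.continuousOn.mono hηΩ).abs.pow β))
    refine exists_mem_inter_of_growth (ψ := fun y => -(B * |v y| ^ α)) one_lt_two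
      (self_subset_cthickening K hx) hux hbdd fun y hy hyT hgy hyx => ?_
    simp only [mem_ofPred_eq, not_le, lt_min_iff] at hyT
    have hvy : v y ≠ 0 := fun hvy => hux.not_ge (hgy.trans_eq (by simp [hvy, hβ]))
    obtain ⟨w, hw, hwy, hgw⟩ := hgrowth u hu huv y hy hvy hyT.2.1.le
    refine ⟨w, mem_cthickening_of_dist_le w x η K hx ?_, by linarith, hgw⟩
    have hvε : B * |v y| ^ α ≤ B * ε ^ α := by
      gcongr
      exact hsmall y hy hyT.1
    linarith [dist_triangle w y x, mem_ball.1 hw, show 0 ≤ B * |v x| ^ α by positivity]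
  calc |u x| * |v x| ^ β ≤ |u y| * |v y| ^ β := hxy
    _ ≤ m * max S 1 ^ β := by
      gcongr
      · exact hum y (hηL hyη) hyc
      · exact (hS y hyη).trans (le_max_left _ _)
    _ = max S 1 ^ β * m := mul_comm _ _

lemma exists_abs_mul_infDist_pow_le (hΩ : IsOpen Ω) (hΩc : IsPreconnected Ω) (hK : IsCompact K)
    (hL : IsOpen L) (hKL : K ⊆ L) (hLΩ : L ⊆ Ω) (hv : HarmonicOnNhd v Ω)
    (hv0 : ∃ x ∈ Ω, v x ≠ 0) (hne : (nodalSet v Ω).Nonempty) :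
    ∃ N : ℕ, N ≠ 0 ∧ ∃ A > 0, ∃ c > 0, ∀ u : E → ℝ, HarmonicOnNhd u Ω →
      nodalSet u Ω = nodalSet v Ω → ∀ m ≥ 0,
        (∀ y ∈ L, c ≤ infDist y (nodalSet v Ω) → |u y| ≤ m) →
          ∀ x ∈ K, infDist x (nodalSet v Ω) ≤ c →
            |u x| * infDist x (nodalSet v Ω) ^ N ≤ A * m := by
  obtain ⟨β, hβ, A, hA, c, hc, hbound⟩ := exists_abs_mul_abs_pow_le hΩ hΩc hK hL hKL hLΩ hv hv0 hne
  obtain ⟨N, hN, A', hA', r₀, hr₀, hpow⟩ :=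
    exists_infDist_pow_le hΩ hΩc hK (hKL.trans hLΩ) hv hv0
  refine ⟨N * β, mul_ne_zero hN hβ, A' ^ β * A, by positivity, min c r₀, lt_min hc hr₀,
    fun u hu huv m hm hum x hx hd => ?_⟩
  have hux := hbound u hu huv m hm (fun y hy hcy => hum y hy ((min_le_left _ _).trans hcy)) x hx
  have hd0 : 0 ≤ infDist x (nodalSet v Ω) := infDist_nonneg
  calc |u x| * infDist x (nodalSet v Ω) ^ (N * β)
      = |u x| * (infDist x (nodalSet v Ω) ^ N) ^ β := by rw [pow_mul]
    _ ≤ |u x| * (A' * |v x|) ^ β := by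
      gcongr
      exact hpow x hx (hd.trans (min_le_right _ _))
    _ = A' ^ β * (|u x| * |v x| ^ β) := by ring
    _ ≤ A' ^ β * A * m := by rw [mul_assoc]; gcongr

end WeightedBound

section PropagationOfSmallness

variable {E : Type*} [NormedAddCommGroup E] [InnerProductSpace ℝ E] [FiniteDimensional ℝ E]
  {Ω K L : Set E} {v : E → ℝ}

lemma exists_growth_near_nodalSet (hΩ : IsOpen Ω) (hK : IsCompact K) (hKΩ : K ⊆ Ω) :
    ∃ r₀ > 0, ∀ u : E → ℝ, HarmonicOnNhd u Ω → (nodalSet u Ω).Nonempty → ∀ x ∈ K, u x ≠ 0 →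
      infDist x (nodalSet u Ω) ≤ r₀ → ∃ y ∈ ball x (34 * infDist x (nodalSet u Ω)),
        (1 + 1 / harnackConst E) * |u x| ≤ |u y| := by
  obtain ⟨η, hη, hηΩ⟩ := hK.exists_thickening_subset_open hΩ hKΩ
  refine ⟨η / 34, by positivity, fun u hu hne x hx hux hd => ?_⟩
  have hd0 := infDist_nodalSet_pos hΩ hu.continuousOn hne (hKΩ hx) hux
  set d := infDist x (nodalSet u Ω)
  have hxΩ : ball x (34 * d) ⊆ Ω :=
    (ball_subset_ball (by linarith)).trans ((ball_subset_thickening hx η).trans hηΩ)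
  obtain ⟨z, hz, hxz⟩ := (infDist_lt_iff hne).1 (show infDist x (nodalSet u Ω) < 2 * d by linarith)
  have hzx : ball z (32 * d) ⊆ ball x (34 * d) := ball_subset_ball' (by rw [dist_comm]; linarith)
  obtain ⟨y, hy, huy⟩ := exists_growth_of_eq_zero (hu.mono (hzx.trans hxΩ)) hz.2
    (show dist x z ≤ 32 * d / 16 by linarith) hux
  exact ⟨y, hzx hy, huy⟩

lemma exists_growth_of_abs_le_away_from_nodalSet (hΩ : IsOpen Ω) (hΩc : IsPreconnected Ω)
    (hK : IsCompact K) (hL : IsOpen L) (hKL : K ⊆ L) (hLΩ : L ⊆ Ω) (hv : HarmonicOnNhd v Ω)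
    (hv0 : ∃ x ∈ Ω, v x ≠ 0) (hne : (nodalSet v Ω).Nonempty) :
    ∃ γ > (0 : ℝ), ∃ A > 0, ∃ B > 0, ∃ c > 0, ∀ u : E → ℝ, HarmonicOnNhd u Ω →
      nodalSet u Ω = nodalSet v Ω → ∀ m ≥ 0,
        (∀ y ∈ L, c ≤ infDist y (nodalSet v Ω) → |u y| ≤ m) →
          ∀ x ∈ K, u x ≠ 0 → infDist x (nodalSet v Ω) ≤ c →
            ∃ y, dist y x ≤ B * (A * m / |u x|) ^ γ - B * (A * m / |u y|) ^ γ ∧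
              (1 + 1 / harnackConst E) * |u x| ≤ |u y| := by
  obtain ⟨N, hN, A, hA, c, hc, hbound⟩ :=
    exists_abs_mul_infDist_pow_le hΩ hΩc hK hL hKL hLΩ hv hv0 hne
  obtain ⟨r₀, hr₀, hgrowth⟩ := exists_growth_near_nodalSet hΩ hK (hKL.trans hLΩ)
  have hH := two_le_harnackConst E
  have hγ : 0 < (N : ℝ)⁻¹ := by positivity
  obtain ⟨B, hB, hBle⟩ := exists_mul_rpow_le_mul_sub
    (show 1 < 1 + 1 / harnackConst E from lt_add_of_pos_right 1 (by positivity)) hγ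
    (show (0 : ℝ) < 34 by norm_num)
  refine ⟨(N : ℝ)⁻¹, hγ, A, hA, B, hB, min c r₀, lt_min hc hr₀,
    fun u hu huv m hm hum x hx hux hd => ?_⟩
  rw [le_min_iff] at hd
  obtain ⟨y, hy, hxy⟩ := hgrowth u hu (huv ▸ hne) x hx hux (huv ▸ hd.2)
  rw [huv, mem_ball] at hy
  have hux0 : 0 < |u x| := abs_pos.2 hux
  have huy0 : 0 < |u y| := lt_of_lt_of_le (by positivity) hxy
  refine ⟨y, ?_, hxy⟩
  calc dist y x ≤ 34 * infDist x (nodalSet v Ω) := hy.le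
    _ ≤ 34 * (A * m / |u x|) ^ (N : ℝ)⁻¹ := by
      gcongr
      refine le_rpow_inv_natCast_of_pow_le infDist_nonneg hN ((le_div_iff₀' hux0).2 ?_)
      exact hbound u hu huv m hm (fun p hp hcp => hum p hp ((min_le_left _ _).trans hcp)) x hx hd.1
    _ ≤ B * (A * m / |u x|) ^ (N : ℝ)⁻¹ - B * (A * m / |u y|) ^ (N : ℝ)⁻¹ := by
      refine hBle (by positivity) ?_
      rw [← mul_div_assoc, div_le_div_iff₀ huy0 hux0, mul_right_comm, mul_comm (A * m)]
      exact mul_le_mul_of_nonneg_right hxy (by positivity)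

lemma exists_abs_le_mul_of_abs_le_away_from_nodalSet (hΩ : IsOpen Ω) (hΩc : IsPreconnected Ω)
    (hK : IsCompact K) (hL : IsOpen L) (hKL : K ⊆ L) (hLΩ : L ⊆ Ω) (hv : HarmonicOnNhd v Ω)
    (hv0 : ∃ x ∈ Ω, v x ≠ 0) (hne : (nodalSet v Ω).Nonempty) :
    ∃ M > 0, ∃ c > 0, ∀ u : E → ℝ, HarmonicOnNhd u Ω → nodalSet u Ω = nodalSet v Ω → ∀ m ≥ 0,
      (∀ y ∈ L, c ≤ infDist y (nodalSet v Ω) → |u y| ≤ m) → ∀ x ∈ K, |u x| ≤ M * m := by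
  obtain ⟨η, hη, hηL⟩ := hK.exists_cthickening_subset_open hL hKL
  have hKη : IsCompact (cthickening η K) := hK.cthickening
  obtain ⟨γ, hγ, A, hA, B, hB, c, hc, hgrowth⟩ :=
    exists_growth_of_abs_le_away_from_nodalSet hΩ hΩc hKη hL hηL hLΩ hv hv0 hne
  obtain ⟨τ, hτ, hBτ⟩ := exists_pos_mul_rpow_le hγ hη B
  refine ⟨max 1 (A / τ), by positivity, c, hc, fun u hu huv m hm hum x hx => ?_⟩
  by_contra! hcon
  have hux : 0 < |u x| := lt_of_le_of_lt (by positivity) hcon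
  have hH := two_le_harnackConst E
  have hxη : B * (A * m / |u x|) ^ γ ≤ η := by
    refine le_trans ?_ hBτ
    gcongr
    rw [div_le_iff₀ hux, ← div_le_iff₀' hτ, mul_div_right_comm]
    exact (mul_le_mul_of_nonneg_right (le_max_right _ _) hm).trans hcon.le
  obtain ⟨y, ⟨hyη, hyc⟩, hxy⟩ :
      ∃ y ∈ cthickening η K ∩ {y | c ≤ infDist y (nodalSet v Ω)}, |u x| ≤ |u y| := by
    refine exists_mem_inter_of_growth (ψ := fun y => B * (A * m / |u y|) ^ γ)
      (show 1 < 1 + 1 / harnackConst E from lt_add_of_pos_right 1 (by positivity))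
      (self_subset_cthickening K hx) hux
      (hKη.bddAbove_image (hu.continuousOn.mono (hηL.trans hLΩ)).abs) fun y hy hyT hgy hyx => ?_
    obtain ⟨w, hwy, hgw⟩ := hgrowth u hu huv m hm hum y hy (abs_pos.1 (hux.trans_le hgy))
      (not_le.1 hyT).le
    refine ⟨w, mem_cthickening_of_dist_le w x η K hx ?_, hwy, hgw⟩
    linarith [dist_triangle w y x, show 0 ≤ B * (A * m / |u w|) ^ γ by positivity]
  exact hcon.not_ge (hxy.trans ((hum y (hηL hyη) hyc).trans
    (le_mul_of_one_le_left hm (le_max_left _ _))))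

end PropagationOfSmallness

theorem stmt15_general {E : Type*} [NormedAddCommGroup E] [InnerProductSpace ℝ E]
    [FiniteDimensional ℝ E] {Ω K L : Set E} (hΩ : IsOpen Ω) (hΩc : IsPreconnected Ω)
    (hK : IsCompact K) (hL : IsOpen L) (hKL : K ⊆ L) (hLc : IsCompact (closure L))
    (hLΩ : closure L ⊆ Ω) {v : E → ℝ} (hv : HarmonicOnNhd v Ω) (hv0 : ∃ x ∈ Ω, v x ≠ 0)
    (hZ : (nodalSet v Ω).Nonempty) :
    ∃ M > 0, ∃ c > 0, ∀ u : E → ℝ, HarmonicOnNhd u Ω → nodalSet u Ω = nodalSet v Ω →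
      ∀ x ∈ K, |u x| ≤
        M * sSup ((fun y => |u y|) '' {y ∈ L | c ≤ infDist y (nodalSet v Ω)}) := by
  obtain ⟨M, hM, c, hc, hbound⟩ := exists_abs_le_mul_of_abs_le_away_from_nodalSet hΩ hΩc hK hL hKL
    (subset_closure.trans hLΩ) hv hv0 hZ
  refine ⟨M, hM, c, hc, fun u hu huv => hbound u hu huv _ ?_ fun y hy hcy => ?_⟩
  · exact Real.sSup_nonneg (forall_mem_image.2 fun y _ => abs_nonneg (u y))
  · have hbdd : BddAbove ((fun y => |u y|) '' {y ∈ L | c ≤ infDist y (nodalSet v Ω)}) :=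
      (hLc.bddAbove_image (hu.continuousOn.mono hLΩ).abs).mono
        (image_mono ((sep_subset _ _).trans subset_closure))
    exact le_csSup hbdd (mem_image_of_mem _ ⟨hy, hcy⟩)

lemma laplacianAt_eq_laplacian {n : ℕ} (u : En n → ℝ) (x : En n) : laplacianAt u x = Δ u x := by
  rw [laplacian_eq_iteratedFDeriv_orthonormalBasis u (EuclideanSpace.basisFun (Fin n) ℝ)]
  simp [laplacianAt]

lemma HarmonicOnSet.harmonicOnNhd {n : ℕ} {u : En n → ℝ} {Ω : Set (En n)} (hΩ : IsOpen Ω)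
    (hu : HarmonicOnSet u Ω) : HarmonicOnNhd u Ω := fun x hx => by
  refine ⟨hu.1.contDiffAt (hΩ.mem_nhds hx), ?_⟩
  filter_upwards [hΩ.mem_nhds hx] with y hy
  rw [← laplacianAt_eq_laplacian, hu.2 y hy, Pi.zero_apply]

theorem stmt15 (n : ℕ) (v : En n → ℝ)
    (hv : HarmonicOnSet v (ball 0 1))
    (hnc : ¬ ∃ c : ℝ, ∀ x ∈ ball (0 : En n) 1, v x = c)
    (hZ : (zeroSet v (ball 0 1) ∩ ball (0 : En n) (1/2)).Nonempty) :
    ∃ M > (0 : ℝ), ∃ c > (0 : ℝ),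
      ∀ u : En n → ℝ, HarmonicOnSet u (ball 0 1) →
        zeroSet u (ball 0 1) = zeroSet v (ball 0 1) →
        ∀ x ∈ ball (0 : En n) (1/16),
          |u x| ≤ M * sSup ((fun y => |u y|) ''
            {y ∈ ball (0 : En n) (1/2) | c ≤ infDist y (zeroSet v (ball 0 1))}) := by
  have hball : closure (ball (0 : En n) (1 / 2)) ⊆ ball 0 1 :=
    closure_ball_subset_closedBall.trans (closedBall_subset_ball (by norm_num))
  obtain ⟨M, hM, c, hc, hbound⟩ := stmt15_general isOpen_ball (convex_ball 0 1).isPreconnected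
    (isCompact_closedBall 0 (1 / 16)) isOpen_ball
    (closedBall_subset_ball (by norm_num : (1 / 16 : ℝ) < 1 / 2)) isBounded_ball.isCompact_closure
    hball (hv.harmonicOnNhd isOpen_ball) (by by_contra! h; exact hnc ⟨0, h⟩)
    (hZ.mono inter_subset_left)
  exact ⟨M, hM, c, hc, fun u hu huv x hx =>
    hbound u (hu.harmonicOnNhd isOpen_ball) huv x (ball_subset_closedBall hx)⟩
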